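/- arXiv:2110.03077 — 2 statements merged into one kernel-verified Lean document; each statement's English description precedes it below -/
import Mathlib

section
/- Let n be an odd positive integer. Then the complex dimension of the diagonal coinvariant ring R_W of the Weyl group W(B_n) satisfies dim_ℂ R_W ≥ (2n+1)^n + (n-1)(n-3)/4 (note (n-1)(n-3) is divisible by 4 when n is odd). -/
open MvPolynomial

/-- The action of the signed permutation `(ε, σ) ∈ W(Bₙ)` on the polynomial ring
`ℂ[x₁,…,xₙ,y₁,…,yₙ]`, sending `xᵢ ↦ εᵢ x_{σ(i)}` and `yᵢ ↦ εᵢ y_{σ(i)}`. -/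
noncomputable def bAct (n : ℕ) (ε : Fin n → ℤˣ) (σ : Equiv.Perm (Fin n)) :
    MvPolynomial (Fin n ⊕ Fin n) ℂ →ₐ[ℂ] MvPolynomial (Fin n ⊕ Fin n) ℂ :=
  aeval (Sum.elim
    (fun i => (((ε i : ℤ) : ℂ)) • X (Sum.inl (σ i)))
    (fun i => (((ε i : ℤ) : ℂ)) • X (Sum.inr (σ i))))

/-- The ideal `I_W` generated by the `W(Bₙ)`-invariant polynomials of positive degree
(equivalently, by the invariant polynomials with zero constant term). -/
noncomputable def diagIdeal (n : ℕ) : Ideal (MvPolynomial (Fin n ⊕ Fin n) ℂ) :=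
  Ideal.span {f | (∀ ε σ, bAct n ε σ f = f) ∧ constantCoeff f = 0}

namespace DC

/-- The polynomial ring in the two sets of variables. -/
abbrev RR (n : ℕ) := MvPolynomial (Fin n ⊕ Fin n) ℂ

/-- The exponents of a monomial. -/
abbrev EE (n : ℕ) := (Fin n ⊕ Fin n) →₀ ℕ

/-- Permutation of the variables. -/
noncomputable abbrev pm {n : ℕ} (σ : Equiv.Perm (Fin n)) : RR n →ₐ[ℂ] RR n :=
  rename (Sum.map σ σ)

/-- Coefficientwise form of invariance. -/
def PInv (n : ℕ) (h : RR n) : Prop :=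
  (∀ σ : Equiv.Perm (Fin n), pm σ h = h) ∧
    ∀ s : EE n, coeff s h ≠ 0 → ∀ i, Even (s (Sum.inl i) + s (Sum.inr i))

lemma bAct_one (n : ℕ) (σ : Equiv.Perm (Fin n)) (f : RR n) : bAct n 1 σ f = pm σ f := by
  unfold bAct pm
  rw [rename_eq_aeval]
  congr 2
  funext j
  rcases j with j | j <;> simp

lemma coeff_aeval_smul {ι : Type*} (c : ι → ℂ) (f : MvPolynomial ι ℂ) (s : ι →₀ ℕ) :
    coeff s (aeval (fun j => c j • (X j : MvPolynomial ι ℂ)) f)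
      = (s.prod fun j k => c j ^ k) * coeff s f := by
  classical
  induction f using MvPolynomial.induction_on' with
  | monomial u a =>
    have : (aeval (fun j => c j • (X j : MvPolynomial ι ℂ))) (monomial u a)
        = monomial u ((u.prod fun j k => c j ^ k) * a) := by
      rw [aeval_monomial, monomial_eq (s := u)]
      simp only [MvPolynomial.algebraMap_eq, MvPolynomial.smul_eq_C_mul, mul_pow, map_mul,
        map_finsuppProd, map_pow]
      rw [Finsupp.prod_mul]
      ring
    rw [this, coeff_monomial, coeff_monomial]
    split_ifs with h
    · subst h; rfl
    · simp
  | add p q hp hq => rw [map_add, coeff_add, coeff_add, hp, hq]; ring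

lemma pinv_of_inv {n : ℕ} {h : RR n} (H : ∀ ε σ, bAct n ε σ h = h) : PInv n h := by
  classical
  refine ⟨fun σ => by rw [← bAct_one, H], fun s hs i => ?_⟩
  set ε : Fin n → ℤˣ := fun j => if j = i then -1 else 1 with hε
  have h1 := congrArg (coeff s) (H ε 1)
  have h2 : bAct n ε 1 h = aeval (fun j => (Sum.elim (fun i => (((ε i : ℤ) : ℂ))) (fun i => (((ε i : ℤ) : ℂ))) j)
      • (X j : RR n)) h := by
    unfold bAct
    congr 2
    funext j
    rcases j with j | j <;> simp
  rw [h2, coeff_aeval_smul] at h1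
  have h3 : (s.prod fun j k => (Sum.elim (fun i => (((ε i : ℤ) : ℂ))) (fun i => (((ε i : ℤ) : ℂ))) j) ^ k)
      = (-1 : ℂ) ^ (s (Sum.inl i) + s (Sum.inr i)) := by
    rw [Finsupp.prod_fintype _ _ (by simp), Fintype.prod_sum_type]
    rw [Finset.prod_eq_single i, Finset.prod_eq_single i]
    · simp [hε, pow_add]
    all_goals simp +contextual [hε]
  rw [h3] at h1
  by_contra hodd
  rw [Nat.not_even_iff_odd] at hodd
  rw [hodd.neg_one_pow] at h1
  apply hs
  have : (2 : ℂ) * coeff s h = 0 := by linear_combination -h1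
  simpa using this

lemma pinv_comp {n : ℕ} {h : RR n} (H : PInv n h) (d : ℕ) : PInv n (homogeneousComponent d h) := by
  refine ⟨fun σ => ?_, fun s hs => ?_⟩
  · have hinj : Function.Injective (Sum.map σ σ) := Sum.map_injective.2 ⟨σ.injective, σ.injective⟩
    ext s
    have hs : ∃ t : EE n, s = Finsupp.mapDomain (Sum.map σ σ) t := by
      refine ⟨Finsupp.mapDomain (Sum.map σ.symm σ.symm) s, ?_⟩
      rw [← Finsupp.mapDomain_comp]
      simp
    obtain ⟨t, rfl⟩ := hs
    rw [coeff_rename_mapDomain _ hinj, coeff_homogeneousComponent, coeff_homogeneousComponent]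
    have h1 : coeff t h = coeff (Finsupp.mapDomain (Sum.map σ σ) t) h := by
      conv_rhs => rw [← H.1 σ]
      rw [coeff_rename_mapDomain _ hinj]
    rw [h1, Finsupp.degree_mapDomain]
  · apply H.2 s
    intro h0
    apply hs
    rw [coeff_homogeneousComponent, h0]; simp

/-- the span of homogeneous invariants of positive degree, multiplied by monomials -/
noncomputable def I2 (n : ℕ) : Submodule ℂ (RR n) :=
  Submodule.span ℂ {f | ∃ (s : EE n) (h : RR n) (e : ℕ), PInv n h ∧ h.IsHomogeneous e ∧ 0 < e ∧
    f = monomial s 1 * h}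

lemma diag_le_I2 {n : ℕ} {f : RR n} (hf : f ∈ diagIdeal n) : f ∈ I2 n := by
  unfold diagIdeal at hf
  refine Submodule.span_induction ?_ (zero_mem _) (fun _ _ _ _ => add_mem) ?_ hf
  · rintro h ⟨H, h0⟩
    rw [← sum_homogeneousComponent h]
    refine Submodule.sum_mem _ fun d _ => ?_
    rcases Nat.eq_zero_or_pos d with rfl | hd
    · rw [homogeneousComponent_zero]
      have : coeff 0 h = 0 := h0
      rw [this]; simp
    · refine Submodule.subset_span ⟨0, _, d, pinv_comp (pinv_of_inv H) d,
        homogeneousComponent_isHomogeneous d h, hd, ?_⟩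
      simp
  · intro a x _ hx
    rw [smul_eq_mul]
    unfold I2 at hx ⊢
    refine Submodule.span_induction ?_ (by simp) (fun _ _ _ _ h1 h2 => by rw [mul_add]; exact add_mem h1 h2)
      (fun c x _ hx => by rw [mul_smul_comm]; exact Submodule.smul_mem _ _ hx) hx
    rintro _ ⟨s, h, e, H, hh, he, rfl⟩
    induction a using MvPolynomial.induction_on' with
    | monomial u a =>
      rw [← mul_assoc, monomial_mul, mul_one, show monomial (u + s) a = a • monomial (u + s) (1:ℂ) by
        rw [smul_monomial]; simp, smul_mul_assoc]
      exact Submodule.smul_mem _ _ (Submodule.subset_span ⟨_, h, e, H, hh, he, rfl⟩)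
    | add p q hp hq => rw [add_mul]; exact add_mem hp hq

/-- `I2` is closed under homogeneous components. -/
lemma I2_comp {n : ℕ} {f : RR n} (hf : f ∈ I2 n) (d : ℕ) : homogeneousComponent d f ∈ I2 n := by
  unfold I2 at hf
  refine Submodule.span_induction ?_ (by simp) (fun _ _ _ _ h1 h2 => by rw [map_add]; exact add_mem h1 h2)
      (fun c x _ hx => by rw [map_smul]; exact Submodule.smul_mem _ _ hx) hf
  rintro _ ⟨s, h, e, H, hh, he, rfl⟩
  have := (isHomogeneous_monomial (1:ℂ) (rfl : Finsupp.degree s = _)).mul hh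
  rw [homogeneousComponent_of_mem ((mem_homogeneousSubmodule _ _).2 this)]
  split_ifs
  · exact Submodule.subset_span ⟨s, h, e, H, hh, he, rfl⟩
  · exact zero_mem _

/-! ### finite dimensionality -/

lemma finite_quot (n : ℕ) : Module.Finite ℂ (RR n ⧸ diagIdeal n) := by
  classical
  have key : ∀ j : Fin n ⊕ Fin n, IsIntegral ℂ (Ideal.Quotient.mk (diagIdeal n) (X j : RR n)) := by
    have main : ∀ (v : Fin n → Fin n ⊕ Fin n) (hv : ∀ ε σ i, bAct n ε σ (X (v i)) =
        (((ε i : ℤ) : ℂ)) • X (v (σ i))) (i : Fin n),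
        IsIntegral ℂ (Ideal.Quotient.mk (diagIdeal n) (X (v i) : RR n)) := by
      intro v hv i
      set P : Polynomial (RR n) := ∏ i, (Polynomial.X - Polynomial.C ((X (v i) : RR n) ^ 2)) with hP
      have hPinv : ∀ ε σ, P.map (bAct n ε σ : RR n →+* RR n) = P := by
        intro ε σ
        rw [hP, Polynomial.map_prod]
        rw [← Equiv.prod_comp σ (fun i => Polynomial.X - Polynomial.C ((X (v i) : RR n) ^ 2))]
        refine Finset.prod_congr rfl fun i _ => ?_
        have h1 : ((((ε i : ℤ) : ℂ))) ^ 2 = 1 := by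
          have : ((ε i : ℤ)) ^ 2 = 1 := by
            rw [← Units.val_pow_eq_pow_val, Int.units_sq]; rfl
          exact_mod_cast this
        rw [Polynomial.map_sub, Polynomial.map_X, Polynomial.map_C]
        simp only [RingHom.coe_coe, map_pow, hv, smul_pow, h1, one_smul]
      set P0 : Polynomial ℂ := P.map (constantCoeff : RR n →+* ℂ) with hP0
      have hmod : P.map (Ideal.Quotient.mk (diagIdeal n)) = P0.map (algebraMap ℂ (RR n ⧸ diagIdeal n)) := by
        ext k
        rw [Polynomial.coeff_map, Polynomial.coeff_map, hP0, Polynomial.coeff_map]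
        have : algebraMap ℂ (RR n ⧸ diagIdeal n) (constantCoeff (P.coeff k)) =
          Ideal.Quotient.mk (diagIdeal n) (C (constantCoeff (P.coeff k))) := rfl
        rw [this, Ideal.Quotient.eq]
        refine Ideal.subset_span ⟨fun ε σ => ?_, by simp⟩
        rw [map_sub]
        congr 1
        · have := congrArg (fun p => Polynomial.coeff p k) (hPinv ε σ)
          simpa [Polynomial.coeff_map] using this
        · exact (bAct n ε σ).commutes _
      have hmonic : P.Monic := Polynomial.monic_prod_of_monic _ _ fun i _ => Polynomial.monic_X_sub_C _
      have h2 : IsIntegral ℂ ((Ideal.Quotient.mk (diagIdeal n) (X (v i) : RR n)) ^ 2) := by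
        refine ⟨P0, hmonic.map _, ?_⟩
        rw [← Polynomial.eval_map, ← hmod, ← map_pow, Polynomial.eval_map, Polynomial.eval₂_hom]
        rw [hP, Polynomial.eval_prod, Finset.prod_eq_zero (Finset.mem_univ i) (by simp), map_zero]
      exact IsIntegral.of_pow (by norm_num) h2
    intro j
    rcases j with j | j
    · exact main Sum.inl (fun ε σ i => by simp [bAct]) j
    · exact main Sum.inr (fun ε σ i => by simp [bAct]) j
  have : Algebra.IsIntegral ℂ (RR n ⧸ diagIdeal n) := by
    refine ⟨fun x => ?_⟩
    obtain ⟨f, rfl⟩ := Ideal.Quotient.mk_surjective x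
    induction f using MvPolynomial.induction_on with
    | C a => exact isIntegral_algebraMap (R := ℂ) (x := a)
    | add p q hp hq => rw [map_add]; exact hp.add hq
    | mul_X p i hp => rw [map_mul]; exact hp.mul (key i)
  exact Algebra.IsIntegral.finite

/-! ### the filtered comparison lemma -/

lemma filtered_bound {n : ℕ} {M : Type*} [AddCommGroup M] [Module ℂ M]
    (S : RR n →ₗ[ℂ] M) (hsurj : Function.Surjective S)
    (hS : ∀ f ∈ I2 n, ∀ d, f.IsHomogeneous d → ∃ g : RR n, (∀ s ∈ g.support, s.degree < d) ∧ S g = S f) :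
    Module.finrank ℂ M ≤ Module.finrank ℂ (RR n ⧸ diagIdeal n) := by
  classical
  have := finite_quot n
  let π : RR n →ₗ[ℂ] (RR n ⧸ diagIdeal n) := (Ideal.Quotient.mkₐ ℂ (diagIdeal n)).toLinearMap
  let H : Set (RR n ⧸ diagIdeal n) := {x | ∃ (f : RR n) (d : ℕ), f.IsHomogeneous d ∧ π f = x}
  have hHtop : Submodule.span ℂ H = ⊤ := by
    rw [eq_top_iff]
    rintro x -
    obtain ⟨f, rfl⟩ : ∃ f, π f = x := Ideal.Quotient.mk_surjective x
    rw [← sum_homogeneousComponent f, map_sum]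
    exact Submodule.sum_mem _ fun d _ => Submodule.subset_span
      ⟨_, d, homogeneousComponent_isHomogeneous d f, rfl⟩
  obtain ⟨b, hbH, hbspan, -⟩ := Submodule.exists_fun_fin_finrank_span_eq ℂ H
  choose bf bd hbd hbf using hbH
  have hspan : ∀ d, ∀ f : RR n, f.IsHomogeneous d → S f ∈ Submodule.span ℂ (Set.range fun i => S (bf i)) := by
    intro d
    induction d using Nat.strong_induction_on with
    | _ d ih =>
      intro f hf
      have h1 : π f ∈ Submodule.span ℂ (Set.range b) := by rw [hbspan, hHtop]; trivial
      rw [Submodule.mem_span_range_iff_exists_fun] at h1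
      obtain ⟨c, hc⟩ := h1
      have h2 : f - ∑ i, c i • bf i ∈ I2 n := by
        apply diag_le_I2
        rw [← Ideal.Quotient.eq]
        change π f = π _
        rw [map_sum, ← hc]
        simp [hbf]
      have h3 := I2_comp h2 d
      have h4 : f = homogeneousComponent d (f - ∑ i, c i • bf i)
          + ∑ i, c i • (if d = bd i then bf i else 0) := by
        rw [map_sub, map_sum, homogeneousComponent_of_mem ((mem_homogeneousSubmodule _ _).2 hf), if_pos rfl]
        simp only [map_smul]
        simp only [homogeneousComponent_of_mem ((mem_homogeneousSubmodule _ _).2 (hbd _))]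
        abel
      rw [h4, map_add]
      refine add_mem ?_ ?_
      · obtain ⟨g, hg, hgS⟩ := hS _ h3 d (homogeneousComponent_isHomogeneous _ _)
        rw [← hgS, ← sum_homogeneousComponent g, map_sum]
        refine Submodule.sum_mem _ fun k _ => ?_
        by_cases hk : k < d
        · exact ih k hk _ (homogeneousComponent_isHomogeneous _ _)
        · rw [homogeneousComponent_eq_zero']
          · simp
          · intro s hs
            have := hg s hs
            omega
      · rw [map_sum]
        refine Submodule.sum_mem _ fun i _ => ?_
        rw [map_smul]
        refine Submodule.smul_mem _ _ ?_
        split_ifs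
        · exact Submodule.subset_span ⟨i, rfl⟩
        · simp
  have htop : Submodule.span ℂ (Set.range fun i => S (bf i)) = ⊤ := by
    rw [eq_top_iff]
    rintro x -
    obtain ⟨f, rfl⟩ := hsurj x
    rw [← sum_homogeneousComponent f, map_sum]
    exact Submodule.sum_mem _ fun d _ => hspan d _ (homogeneousComponent_isHomogeneous d f)
  have h5 := finrank_range_le_card (R := ℂ) (fun i => S (bf i))
  rw [Set.finrank, htop, finrank_top, Fintype.card_fin, hHtop, finrank_top] at h5
  exact h5

end DC

namespace DC

/-- lowering coefficients -/
noncomputable def cc (k : ℤ) : ℂ := if Even k then (k : ℂ) else 1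
/-- raising coefficients -/
noncomputable def dd (n : ℕ) (k : ℤ) : ℂ := if Even k then 1 else (k : ℂ) - (2 * n + 1)

/-- `TT n o a b k` is the coefficient of `e_k` in `X ^ a Y ^ b e_o`. -/
noncomputable def TT (n : ℕ) (o : ℤ) : ℕ → ℕ → ℤ → ℂ
  | 0, 0, k => if k = o then 1 else 0
  | 0, b + 1, k => cc (k + 1) * TT n o 0 b (k + 1)
  | a + 1, b, k => dd n k * TT n o a b (k - 1)

/-- the structure constants of `[Y, X ^ a]` -/
noncomputable def kap (n : ℕ) : ℕ → ℕ → ℂ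
  | 0, _ => 0
  | a + 1, b => kap n a b + 1 + (2 * n + 1) * (-1) ^ (a + b)

lemma TT_zero_zero (n : ℕ) (o k : ℤ) : TT n o 0 0 k = if k = o then 1 else 0 := by
  rw [TT]
lemma TT_zero_succ (n : ℕ) (o k : ℤ) (b : ℕ) : TT n o 0 (b + 1) k = cc (k + 1) * TT n o 0 b (k + 1) := by
  rw [TT]
lemma TT_succ (n : ℕ) (o k : ℤ) (a b : ℕ) : TT n o (a + 1) b k = dd n k * TT n o a b (k - 1) := by
  rw [TT]

lemma TT_parity {n : ℕ} {o : ℤ} (a b : ℕ) : ∀ k : ℤ, TT n o a b k ≠ 0 → Even (k + o + a + b) := by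
  induction a with
  | zero =>
    induction b with
    | zero =>
      intro k hk
      rw [TT_zero_zero] at hk
      have : k = o := by by_contra h; simp [h] at hk
      subst this; simp
    | succ b ih =>
      intro k hk
      rw [TT_zero_succ] at hk
      have := ih _ (right_ne_zero_of_mul hk)
      obtain ⟨r, hr⟩ := this
      exact ⟨r, by push_cast at hr ⊢; linarith⟩
  | succ a ih =>
    intro k hk
    rw [TT_succ] at hk
    have := ih _ (right_ne_zero_of_mul hk)
    obtain ⟨r, hr⟩ := this
    exact ⟨r + 1, by push_cast at hr ⊢; linarith⟩

lemma TT_box {n : ℕ} {o : ℤ} (h0 : 0 ≤ o) (h1 : o ≤ 2 * n) (a b : ℕ) :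
    ∀ k : ℤ, TT n o a b k ≠ 0 → 0 ≤ k ∧ k ≤ 2 * n := by
  induction a with
  | zero =>
    induction b with
    | zero =>
      intro k hk
      rw [TT_zero_zero] at hk
      have : k = o := by by_contra h; simp [h] at hk
      subst this; exact ⟨h0, h1⟩
    | succ b ih =>
      intro k hk
      rw [TT_zero_succ] at hk
      have := ih _ (right_ne_zero_of_mul hk)
      have h2 := left_ne_zero_of_mul hk
      have : k ≠ -1 := by rintro rfl; simp [cc] at h2
      omega
  | succ a ih =>
    intro k hk
    rw [TT_succ] at hk
    have := ih _ (right_ne_zero_of_mul hk)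
    have h2 := left_ne_zero_of_mul hk
    have : k ≠ 2 * n + 1 := by
      rintro rfl
      apply h2
      rw [dd, if_neg (by simp)]
      push_cast; ring
    omega

lemma cd_diff (n : ℕ) (k : ℤ) : cc (k + 1) * dd n (k + 1) - cc k * dd n k
    = 1 + (2 * n + 1) * (if Even k then -1 else 1) := by
  by_cases h : Even k
  · have h' : ¬ Even (k + 1) := by rw [Int.even_add_one]; simpa using h
    simp only [cc, dd, h, h', if_true, if_false]; push_cast; ring
  · have h' : Even (k + 1) := by rw [Int.even_add_one]; exact h
    simp only [cc, dd, h, h', if_true, if_false]; push_cast; ring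

lemma TT_Y {n : ℕ} {o : ℤ} (ho : Odd o) (a b : ℕ) : ∀ k : ℤ,
    cc (k + 1) * TT n o a b (k + 1) = TT n o a (b + 1) k + kap n a b * TT n o (a - 1) b k := by
  induction a with
  | zero => intro k; rw [TT_zero_succ, kap]; ring
  | succ a ih =>
    intro k
    rw [TT_succ, TT_succ, kap]
    simp only [add_sub_cancel_right, Nat.add_sub_cancel]
    have h1 := ih (k - 1)
    rw [sub_add_cancel] at h1
    have h2 : kap n a b * (dd n k * TT n o (a - 1) b (k - 1)) = kap n a b * TT n o a b k := by
      cases a with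
      | zero => simp [kap]
      | succ a => rw [TT_succ]; simp
    have h3 : (1 + (2 * (n:ℂ) + 1) * (if Even k then -1 else 1)) * TT n o a b k
        = (1 + (2 * n + 1) * (-1) ^ (a + b)) * TT n o a b k := by
      by_cases hz : TT n o a b k = 0
      · rw [hz]; ring
      · have hp := TT_parity a b k hz
        have hiff : Even k ↔ Odd (a + b) := by
          rw [← Int.not_odd_iff_even]
          rw [← Nat.not_even_iff_odd, not_iff_not]
          rw [← Int.even_coe_nat]
          rcases ho with ⟨r, rfl⟩
          rcases hp with ⟨t, ht⟩
          push_cast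
          constructor
          · rintro ⟨u, rfl⟩
            exact ⟨t - r - u - 1, by linarith⟩
          · rintro ⟨u, hu⟩
            exact ⟨t - r - u - 1, by linarith⟩
        congr 3
        by_cases hk : Even k
        · rw [if_pos hk, (hiff.1 hk).neg_one_pow]
        · rw [if_neg hk]
          have : Even (a + b) := by rw [← Nat.not_odd_iff_even, ← hiff]; exact hk
          rw [this.neg_one_pow]
    rw [← cd_diff] at h3
    linear_combination dd n k * h1 + h3 + h2

/-- functions on the lattice -/
abbrev LL (n : ℕ) := (Fin n → ℤ) → ℂ

/-- the odd number attached to an index -/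
def od {n : ℕ} (j : Fin n) : ℤ := 2 * (j : ℕ) + 1

lemma od_odd {n : ℕ} (j : Fin n) : Odd (od j) := ⟨_, rfl⟩
lemma od_nonneg {n : ℕ} (j : Fin n) : 0 ≤ od j := by unfold od; positivity
lemma od_le {n : ℕ} (j : Fin n) : od j ≤ 2 * n := by unfold od; have := j.2; omega

/-- The matrix whose determinant is the coefficient of `X^a Y^b δ`. -/
noncomputable def pMat {n : ℕ} (s : EE n) (k : Fin n → ℤ) : Matrix (Fin n) (Fin n) ℂ :=
  Matrix.of fun i j => TT n (od j) (s (Sum.inl i)) (s (Sum.inr i)) (k i)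

/-- The map `f ↦ f(X,Y) δ` (normally ordered). -/
noncomputable def psi (n : ℕ) : RR n →ₗ[ℂ] LL n :=
  (basisMonomials (Fin n ⊕ Fin n) ℂ).constr ℂ fun s k => (pMat s k).det

lemma psi_mon {n : ℕ} (s : EE n) (k : Fin n → ℤ) : psi n (monomial s 1) k = (pMat s k).det := by
  have := (basisMonomials (Fin n ⊕ Fin n) ℂ).constr_basis ℂ (fun s k => (pMat (n := n) s k).det) s
  rw [coe_basisMonomials] at this
  exact congrFun this k

/-- raising operator -/
noncomputable def XO {n : ℕ} (i : Fin n) : LL n →ₗ[ℂ] LL n where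
  toFun v k := dd n (k i) * v (Function.update k i (k i - 1))
  map_add' u v := by funext k; simp [mul_add]
  map_smul' c v := by funext k; simp; ring

/-- lowering operator -/
noncomputable def YO {n : ℕ} (i : Fin n) : LL n →ₗ[ℂ] LL n where
  toFun v k := cc (k i + 1) * v (Function.update k i (k i + 1))
  map_add' u v := by funext k; simp [mul_add]
  map_smul' c v := by funext k; simp; ring

lemma XO_apply {n : ℕ} (i : Fin n) (v : LL n) (k) : XO i v k = dd n (k i) * v (Function.update k i (k i - 1)) := rfl
lemma YO_apply {n : ℕ} (i : Fin n) (v : LL n) (k) : YO i v k = cc (k i + 1) * v (Function.update k i (k i + 1)) := rfl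

lemma pMat_eq {n : ℕ} (s s' : EE n) (k k' : Fin n → ℤ) (i : Fin n)
    (h : ∀ i', i' ≠ i → s' (Sum.inl i') = s (Sum.inl i') ∧ s' (Sum.inr i') = s (Sum.inr i') ∧ k' i' = k i') :
    pMat s' k' = (pMat s k).updateRow i (fun j => TT n (od j) (s' (Sum.inl i)) (s' (Sum.inr i)) (k' i)) := by
  ext i' j
  by_cases hi : i' = i
  · subst hi; simp [pMat]
  · obtain ⟨h1, h2, h3⟩ := h i' hi
    simp [pMat, Matrix.updateRow_ne hi, h1, h2, h3]

lemma psi_X {n : ℕ} (i : Fin n) (f : RR n) : psi n (X (Sum.inl i) * f) = XO i (psi n f) := by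
  induction f using MvPolynomial.induction_on' with
  | monomial s a =>
    rw [show monomial s a = a • monomial s (1:ℂ) by rw [smul_monomial]; simp]
    rw [mul_smul_comm, map_smul, map_smul, map_smul]
    congr 1
    funext k
    rw [XO_apply, X, monomial_mul, one_mul, psi_mon, psi_mon]
    rw [pMat_eq s (Finsupp.single (Sum.inl i) 1 + s) k k i (by
      intro i' hi; simp [Ne.symm hi])]
    rw [pMat_eq s s k (Function.update k i (k i - 1)) i (by intro i' hi; simp [hi])]
    rw [← Matrix.det_updateRow_smul]
    congr 2
    funext j
    simp [TT_succ, add_comm 1]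
  | add p q hp hq => rw [mul_add, map_add, map_add, hp, hq, map_add]

lemma psi_Y {n : ℕ} (i : Fin n) (s : EE n) : YO i (psi n (monomial s 1)) =
    psi n (X (Sum.inr i) * monomial s 1) + kap n (s (Sum.inl i)) (s (Sum.inr i)) •
      psi n (monomial (s - Finsupp.single (Sum.inl i) 1) 1) := by
  funext k
  rw [Pi.add_apply, Pi.smul_apply, smul_eq_mul, YO_apply, X, monomial_mul, one_mul, psi_mon, psi_mon, psi_mon]
  rw [pMat_eq s (Finsupp.single (Sum.inr i) 1 + s) k k i (by
      intro i' hi; simp [Ne.symm hi])]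
  rw [pMat_eq s (s - Finsupp.single (Sum.inl i) 1) k k i (by
      intro i' hi; simp [Ne.symm hi])]
  rw [pMat_eq s s k (Function.update k i (k i + 1)) i (by intro i' hi; simp [hi])]
  rw [← Matrix.det_updateRow_smul, ← Matrix.det_updateRow_smul, ← Matrix.det_updateRow_add]
  congr 2
  funext j
  simpa [add_comm 1] using TT_Y (n := n) (od_odd j) (s (Sum.inl i)) (s (Sum.inr i)) (k i)

/-- polynomials of degree `< d` -/
noncomputable abbrev AA (n d : ℕ) : Submodule ℂ (RR n) := restrictSupport ℂ {s : EE n | s.degree < d}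

/-- the filtration -/
noncomputable abbrev FF (n d : ℕ) : Submodule ℂ (LL n) := (AA n d).map (psi n)

lemma mem_FF_mon {n d : ℕ} (s : EE n) (hs : s.degree < d) (c : ℂ) : psi n (monomial s c) ∈ FF n d := by
  refine Submodule.mem_map_of_mem ?_
  rw [mem_restrictSupport_iff]
  intro t ht
  have := support_monomial_subset ht
  simp at this
  subst this; exact hs

lemma FF_of_mon {n d : ℕ} (W : Submodule ℂ (LL n)) (T : LL n →ₗ[ℂ] LL n)
    (h : ∀ s : EE n, s.degree < d → T (psi n (monomial s 1)) ∈ W) :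
    ∀ v ∈ FF n d, T v ∈ W := by
  rintro _ ⟨f, hf, rfl⟩
  rw [SetLike.mem_coe, mem_restrictSupport_iff] at hf
  rw [f.as_sum, map_sum, map_sum]
  refine Submodule.sum_mem _ fun s hs => ?_
  rw [show monomial s (coeff s f) = coeff s f • monomial s (1:ℂ) by rw [smul_monomial]; simp, map_smul, map_smul]
  exact Submodule.smul_mem _ _ (h s (hf hs))

lemma FF_mono {n d e : ℕ} (h : d ≤ e) : FF n d ≤ FF n e := by
  intro v hv
  have := FF_of_mon (FF n e) LinearMap.id (d := d) (fun s hs => mem_FF_mon s (by omega) 1) v hv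
  simpa using this

lemma XO_FF {n d : ℕ} (i : Fin n) : ∀ v ∈ FF n d, XO i v ∈ FF n (d + 1) := by
  apply FF_of_mon
  intro s hs
  rw [← psi_X, X, monomial_mul]
  apply mem_FF_mon
  simp; omega

lemma YO_FF {n d : ℕ} (i : Fin n) : ∀ v ∈ FF n d, YO i v ∈ FF n (d + 1) := by
  apply FF_of_mon
  intro s hs
  rw [psi_Y, X, monomial_mul]
  refine add_mem (mem_FF_mon _ (by simp; omega) _) (Submodule.smul_mem _ _ (mem_FF_mon _ ?_ _))
  have : (s - Finsupp.single (Sum.inl i) 1).degree ≤ s.degree := Finsupp.degree_mono tsub_le_self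
  omega

lemma psi_Y_homog {n d : ℕ} (i : Fin n) (f : RR n) (hf : f.IsHomogeneous d) :
    psi n (X (Sum.inr i) * f) - YO i (psi n f) ∈ FF n d := by
  rw [f.as_sum, Finset.mul_sum, map_sum, map_sum, map_sum, ← Finset.sum_sub_distrib]
  refine Submodule.sum_mem _ fun s hs => ?_
  rw [show monomial s (coeff s f) = coeff s f • monomial s (1:ℂ) by rw [smul_monomial]; simp, mul_smul_comm,
    map_smul, map_smul, map_smul, ← smul_sub, psi_Y]
  refine Submodule.smul_mem _ _ ?_
  rw [sub_add_cancel_left]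
  refine Submodule.neg_mem _ ?_
  rcases Nat.eq_zero_or_pos (s (Sum.inl i)) with h0 | h0
  · rw [h0, kap, zero_smul]; exact zero_mem _
  · refine Submodule.smul_mem _ _ (mem_FF_mon _ ?_ _)
    have hd : s.degree = d := by
      rw [Finsupp.degree_eq_weight_one]; exact hf (by simpa using hs)
    have h1 : s = (s - Finsupp.single (Sum.inl i) 1) + Finsupp.single (Sum.inl i) 1 := by
      rw [tsub_add_cancel_of_le]
      rw [Finsupp.single_le_iff]; exact h0
    have h2 := congrArg Finsupp.degree h1
    simp at h2
    omega

end DC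

namespace DC

lemma mapDomain_inl {n : ℕ} (σ : Equiv.Perm (Fin n)) (s : EE n) (i : Fin n) :
    (Finsupp.mapDomain (Sum.map σ σ) s) (Sum.inl (σ i)) = s (Sum.inl i) :=
  Finsupp.mapDomain_apply (f := Sum.map σ σ) (Sum.map_injective.2 ⟨σ.injective, σ.injective⟩) s (Sum.inl i)

lemma mapDomain_inr {n : ℕ} (σ : Equiv.Perm (Fin n)) (s : EE n) (i : Fin n) :
    (Finsupp.mapDomain (Sum.map σ σ) s) (Sum.inr (σ i)) = s (Sum.inr i) :=
  Finsupp.mapDomain_apply (f := Sum.map σ σ) (Sum.map_injective.2 ⟨σ.injective, σ.injective⟩) s (Sum.inr i)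

/-- complex valued sign -/
noncomputable abbrev sg {n : ℕ} (σ : Equiv.Perm (Fin n)) : ℂ := ((Equiv.Perm.sign σ : ℤ) : ℂ)

lemma sg_mul_self {n : ℕ} (σ : Equiv.Perm (Fin n)) : sg σ * sg σ = 1 := by
  have : ((Equiv.Perm.sign σ : ℤ)) * (Equiv.Perm.sign σ : ℤ) = 1 := by
    rw [← Units.val_mul, Int.units_mul_self]; rfl
  unfold sg
  exact_mod_cast this

lemma sg_mul {n : ℕ} (σ τ : Equiv.Perm (Fin n)) : sg (σ * τ) = sg σ * sg τ := by
  simp [sg]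

lemma mon_smul {n : ℕ} (s : EE n) (a : ℂ) : (monomial s a : RR n) = a • monomial s 1 := by
  rw [smul_monomial]; simp

lemma psi_pm {n : ℕ} (σ : Equiv.Perm (Fin n)) (f : RR n) (k : Fin n → ℤ) :
    psi n (pm σ f) k = sg σ * psi n f (k ∘ σ) := by
  induction f using MvPolynomial.induction_on' with
  | monomial s a =>
    rw [mon_smul, map_smul, map_smul, map_smul, Pi.smul_apply, Pi.smul_apply, rename_monomial, psi_mon, psi_mon]
    have h : (pMat (Finsupp.mapDomain (Sum.map σ σ) s) k).submatrix σ id = pMat s (k ∘ σ) := by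
      ext i j
      simp [pMat, mapDomain_inl, mapDomain_inr]
    rw [← h, Matrix.det_permute]
    have := sg_mul_self σ
    simp only [smul_eq_mul]
    linear_combination (-a * (pMat (Finsupp.mapDomain (Sum.map σ σ) s) k).det) * this
  | add p q hp hq => rw [map_add, map_add, map_add, Pi.add_apply, Pi.add_apply, hp, hq]; ring

lemma psi_mon_parity {n : ℕ} (s : EE n) (k : Fin n → ℤ) (h : psi n (monomial s 1) k ≠ 0) (i : Fin n) :
    Odd (k i + s (Sum.inl i) + s (Sum.inr i)) := by
  by_contra hc
  apply h
  rw [psi_mon]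
  refine Matrix.det_eq_zero_of_row_eq_zero i fun j => ?_
  by_contra h0
  apply hc
  have := TT_parity _ _ _ h0
  obtain ⟨r, hr⟩ := this
  exact ⟨r - (j : ℕ) - 1, by simp only [od] at hr; linarith⟩

lemma psi_mon_box {n : ℕ} (s : EE n) (k : Fin n → ℤ) (h : psi n (monomial s 1) k ≠ 0) (i : Fin n) :
    0 ≤ k i ∧ k i ≤ 2 * n := by
  by_contra hc
  apply h
  rw [psi_mon]
  refine Matrix.det_eq_zero_of_row_eq_zero i fun j => ?_
  by_contra h0
  exact hc (TT_box (od_nonneg j) (od_le j) _ _ _ h0)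

lemma psi_expand {n : ℕ} (f : RR n) (k : Fin n → ℤ) (h : psi n f k ≠ 0) :
    ∃ s, coeff s f ≠ 0 ∧ psi n (monomial s 1) k ≠ 0 := by
  rw [f.as_sum, map_sum, Finset.sum_apply] at h
  obtain ⟨s, hs, h1⟩ := Finset.exists_ne_zero_of_sum_ne_zero h
  refine ⟨s, by simpa using hs, ?_⟩
  rw [mon_smul, map_smul, Pi.smul_apply] at h1
  exact right_ne_zero_of_mul h1

lemma psi_box {n : ℕ} (f : RR n) (k : Fin n → ℤ) (h : psi n f k ≠ 0) (i : Fin n) :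
    0 ≤ k i ∧ k i ≤ 2 * n := by
  obtain ⟨s, -, hs⟩ := psi_expand f k h
  exact psi_mon_box s k hs i

lemma psi_one_od (n : ℕ) : psi n 1 (od : Fin n → ℤ) = 1 := by
  have : (1 : RR n) = monomial 0 1 := rfl
  rw [this, psi_mon]
  have : pMat (n := n) 0 od = 1 := by
    ext i j
    simp only [pMat, Matrix.of_apply, Finsupp.coe_zero, Pi.zero_apply, TT_zero_zero, Matrix.one_apply]
    congr 1
    simp [od, Fin.ext_iff]
  rw [this, Matrix.det_one]

lemma alt_zero {α : Type*} {n : ℕ} (v : (Fin n → α) → ℂ)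
    (halt : ∀ (σ : Equiv.Perm (Fin n)) k, v k = sg σ * v (k ∘ σ)) (k : Fin n → α) {i j : Fin n}
    (hij : i ≠ j) (hk : k i = k j) : v k = 0 := by
  have h1 := halt (Equiv.swap i j) k
  have h2 : k ∘ Equiv.swap i j = k := by
    funext l
    simp only [Function.comp]
    by_cases hi : l = i
    · subst hi; simp [hk]
    · by_cases hj : l = j
      · subst hj; simp [hk]
      · rw [Equiv.swap_apply_of_ne_of_ne hi hj]
  rw [h2] at h1
  simp [sg, Equiv.Perm.sign_swap hij] at h1
  have : (2 : ℂ) * v k = 0 := by linear_combination h1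
  simpa using this

lemma alt_odd_zero {n : ℕ} (v : LL n) (halt : ∀ (σ : Equiv.Perm (Fin n)) k, v k = sg σ * v (k ∘ σ))
    (hodd : ∀ k, v k ≠ 0 → ∀ i, Odd (k i)) (hbox : ∀ k, v k ≠ 0 → ∀ i, 0 ≤ k i ∧ k i ≤ 2 * n)
    (h0 : v od = 0) : v = 0 := by
  funext k
  by_contra hk
  simp only [Pi.zero_apply] at hk
  have h1 : ∀ i, ∃ t : Fin n, k i = od t := by
    intro i
    obtain ⟨r, hr⟩ := hodd k hk i
    obtain ⟨h1, h2⟩ := hbox k hk i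
    refine ⟨⟨r.toNat, by omega⟩, ?_⟩
    simp only [od]
    omega
  choose t ht using h1
  by_cases hinj : Function.Injective t
  · have hbij : Function.Bijective t := Finite.injective_iff_bijective.1 hinj
    have h2 := halt (Equiv.ofBijective t hbij).symm k
    have h3 : k ∘ (Equiv.ofBijective t hbij).symm = od := by
      funext i
      simp only [Function.comp, ht]
      congr 1
      exact (Equiv.ofBijective t hbij).apply_symm_apply i
    rw [h3, h0, mul_zero] at h2
    exact hk h2
  · simp only [Function.Injective, not_forall] at hinj
    obtain ⟨i, j, hij, hne⟩ := hinj
    exact hk (alt_zero v halt k hne (by rw [ht, ht, hij]))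

lemma psi_pinv {n : ℕ} {h : RR n} (H : PInv n h) : ∃ c : ℂ, psi n h = c • psi n 1 := by
  have key : ∀ g : RR n, PInv n g → (∀ (σ : Equiv.Perm (Fin n)) k, psi n g k = sg σ * psi n g (k ∘ σ)) ∧
      (∀ k, psi n g k ≠ 0 → ∀ i, Odd (k i)) := by
    intro g hg
    refine ⟨fun σ k => ?_, fun k hk i => ?_⟩
    · rw [← psi_pm, hg.1]
    · obtain ⟨s, hs, h1⟩ := psi_expand g k hk
      have h2 := psi_mon_parity s k h1 i
      obtain ⟨r, hr⟩ := hg.2 s hs i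
      obtain ⟨q, hq⟩ := h2
      exact ⟨q - r, by zify at hr; linarith⟩
  have h1 : PInv n 1 := by
    refine ⟨fun σ => by simp, fun s hs i => ?_⟩
    have : s = 0 := by
      by_contra h0
      apply hs
      rw [coeff_one, if_neg (Ne.symm h0)]
    subst this; simp
  obtain ⟨a1, a2⟩ := key h H
  obtain ⟨b1, b2⟩ := key 1 h1
  refine ⟨psi n h od, ?_⟩
  rw [← sub_eq_zero]
  apply alt_odd_zero
  · intro σ k
    simp only [Pi.sub_apply, Pi.smul_apply, smul_eq_mul]
    rw [a1 σ k, b1 σ k]; ring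
  · intro k hk i
    by_cases hz : psi n h k = 0
    · by_cases hz' : psi n 1 k = 0
      · simp [hz, hz'] at hk
      · exact b2 k hz' i
    · exact a2 k hz i
  · intro k hk i
    by_cases hz : psi n h k = 0
    · by_cases hz' : psi n 1 k = 0
      · simp [hz, hz'] at hk
      · exact psi_box _ k hz' i
    · exact psi_box _ k hz i
  · simp [psi_one_od]

lemma psi_I2_gen {n : ℕ} {h : RR n} {e : ℕ} (H : PInv n h) (he : 0 < e) (hh : h.IsHomogeneous e) (m : ℕ) :
    ∀ s : EE n, s.degree = m → psi n (monomial s 1 * h) ∈ FF n (m + e) := by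
  induction m with
  | zero =>
    intro s hs
    have : s = 0 := (Finsupp.degree_eq_zero_iff s).1 hs
    subst this
    obtain ⟨c, hc⟩ := psi_pinv H
    rw [show (monomial (0 : EE n) (1:ℂ)) = 1 from rfl, one_mul, hc]
    refine Submodule.smul_mem _ _ ?_
    exact mem_FF_mon 0 (by simpa using he) 1
  | succ m ih =>
    intro s hs
    have hne : s ≠ 0 := by rintro rfl; simp at hs
    obtain ⟨j, hj⟩ := Finsupp.ne_iff.1 hne
    have h1 : s = Finsupp.single j 1 + (s - Finsupp.single j 1) := by
      rw [add_tsub_cancel_of_le]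
      rw [Finsupp.single_le_iff]
      simp at hj; omega
    have h2 : (s - Finsupp.single j 1).degree = m := by
      have := congrArg Finsupp.degree h1
      simp at this; omega
    have h3 : (monomial s (1:ℂ) : RR n) = X j * monomial (s - Finsupp.single j 1) 1 := by
      rw [X, monomial_mul, mul_one, ← h1]
    have h4 := ih _ h2
    rw [h3, mul_assoc]
    rcases j with i | i
    · rw [psi_X]
      have := XO_FF i _ h4
      rwa [show m + 1 + e = m + e + 1 by ring]
    · have h5 := YO_FF i _ h4
      have h6 := psi_Y_homog i _ ((isHomogeneous_monomial (1:ℂ) h2).mul hh)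
      have h7 := add_mem (FF_mono (Nat.le_succ _) h6) h5
      rw [sub_add_cancel] at h7
      rwa [show m + 1 + e = m + e + 1 by ring]

lemma psi_I2 {n : ℕ} {f : RR n} (hf : f ∈ I2 n) {d : ℕ} (hd : f.IsHomogeneous d) : psi n f ∈ FF n d := by
  have : ∀ f ∈ I2 n, psi n (homogeneousComponent d f) ∈ FF n d := by
    intro f hf
    unfold I2 at hf
    refine Submodule.span_induction ?_ (by simp) (fun _ _ _ _ h1 h2 => by rw [map_add, map_add]; exact add_mem h1 h2)
      (fun c x _ hx => by rw [map_smul, map_smul]; exact Submodule.smul_mem _ _ hx) hf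
    rintro _ ⟨s, h, e, H, hh, he, rfl⟩
    have := (isHomogeneous_monomial (1:ℂ) (rfl : Finsupp.degree s = _)).mul hh
    rw [homogeneousComponent_of_mem ((mem_homogeneousSubmodule _ _).2 this)]
    split_ifs with h1
    · subst h1
      exact psi_I2_gen H he hh _ s rfl
    · simp
  have h2 := this f hf
  rwa [homogeneousComponent_of_mem ((mem_homogeneousSubmodule _ _).2 hd), if_pos rfl] at h2

/-! ### surjectivity onto the box -/

lemma range_XO {n : ℕ} (i : Fin n) {v : LL n} (hv : v ∈ LinearMap.range (psi n)) :
    XO i v ∈ LinearMap.range (psi n) := by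
  obtain ⟨f, rfl⟩ := hv
  exact ⟨_, psi_X i f⟩

lemma range_YO {n : ℕ} (i : Fin n) {v : LL n} (hv : v ∈ LinearMap.range (psi n)) :
    YO i v ∈ LinearMap.range (psi n) := by
  obtain ⟨f, rfl⟩ := hv
  induction f using MvPolynomial.induction_on' with
  | monomial s a =>
    rw [mon_smul, map_smul, map_smul, psi_Y]
    exact Submodule.smul_mem _ _ (add_mem ⟨_, rfl⟩ (Submodule.smul_mem _ _ ⟨_, rfl⟩))
  | add p q hp hq => rw [map_add, map_add]; exact add_mem hp hq

/-- diagonal eigenvalues -/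
noncomputable def qq (n : ℕ) (k : ℤ) : ℂ := dd n k * cc k

lemma qq_inj {n : ℕ} {s t : ℤ} (hs : 0 ≤ s ∧ s ≤ 2 * n) (ht : 0 ≤ t ∧ t ≤ 2 * n) (h : qq n s = qq n t) : s = t := by
  unfold qq cc dd at h
  by_cases h1 : Even s <;> by_cases h2 : Even t <;> simp only [h1, h2, if_true, if_false] at h
  · simpa using h
  · exfalso
    have : s = t - (2 * n + 1) := by
      have : (s : ℂ) = ((t - (2 * n + 1) : ℤ) : ℂ) := by push_cast; linear_combination h
      exact_mod_cast this
    omega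
  · exfalso
    have : t = s - (2 * n + 1) := by
      have : (t : ℂ) = ((s - (2 * n + 1) : ℤ) : ℂ) := by push_cast; linear_combination -h
      exact_mod_cast this
    omega
  · have : (s : ℂ) = t := by linear_combination h
    exact_mod_cast this

lemma XY_diag {n : ℕ} (i : Fin n) (v : LL n) (k) : XO i (YO i v) k = qq n (k i) * v k := by
  rw [XO_apply, YO_apply]
  simp [qq]; ring

lemma range_proj {n : ℕ} (i : Fin n) {v : LL n} (hv : v ∈ LinearMap.range (psi n)) (t0 : ℤ)
    (ht0 : 0 ≤ t0 ∧ t0 ≤ 2 * n) :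
    (fun k => if k i = t0 then v k else 0) ∈ LinearMap.range (psi n) := by
  have h1 : ∀ S : Finset ℤ, (fun k : Fin n → ℤ => (∏ t ∈ S, (qq n (k i) - qq n t)) * v k) ∈ LinearMap.range (psi n) := by
    intro S
    induction S using Finset.induction_on with
    | empty => simpa using hv
    | insert a S ha ih =>
      have := sub_mem (range_XO i (range_YO i ih)) (Submodule.smul_mem _ (qq n a) ih)
      convert this using 1
      funext k
      rw [Finset.prod_insert ha, Pi.sub_apply, XY_diag, Pi.smul_apply, smul_eq_mul]
      ring
  have h2 := Submodule.smul_mem _ ((∏ t ∈ (Finset.Icc (0:ℤ) (2 * n)).erase t0, (qq n t0 - qq n t))⁻¹)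
    (h1 ((Finset.Icc (0:ℤ) (2 * n)).erase t0))
  convert h2 using 1
  funext k
  rw [Pi.smul_apply, smul_eq_mul]
  by_cases hk : k i = t0
  · rw [if_pos hk, hk, ← mul_assoc, inv_mul_cancel₀, one_mul]
    rw [Finset.prod_ne_zero_iff]
    intro t ht
    rw [Finset.mem_erase, Finset.mem_Icc] at ht
    rw [sub_ne_zero]
    intro h
    exact ht.1 (qq_inj ht0 ht.2 h).symm
  · rw [if_neg hk]
    by_cases hz : v k = 0
    · rw [hz]; simp
    · obtain ⟨f, rfl⟩ := hv
      have hb := psi_box f k hz i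
      have h0 : ∏ t ∈ (Finset.Icc (0:ℤ) (2 * n)).erase t0, (qq n (k i) - qq n t) = 0 := by
        refine Finset.prod_eq_zero (i := k i) ?_ (sub_self _)
        rw [Finset.mem_erase, Finset.mem_Icc]; exact ⟨hk, hb⟩
      rw [h0]; simp

lemma range_single_od (n : ℕ) : (Pi.single od 1 : LL n) ∈ LinearMap.range (psi n) := by
  classical
  have h1 : ∀ S : Finset (Fin n), (fun k => if ∀ i ∈ S, k i = od i then psi n 1 k else 0) ∈ LinearMap.range (psi n) := by
    intro S
    induction S using Finset.induction_on with
    | empty => simp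
    | insert a S ha ih =>
      have := range_proj a ih (od a) ⟨od_nonneg a, od_le a⟩
      convert this using 1
      funext k
      simp only [Finset.forall_mem_insert]
      by_cases h1 : k a = od a <;> simp [h1]
  convert h1 Finset.univ using 1
  funext k
  by_cases hk : k = od
  · subst hk; simp [psi_one_od]
  · rw [Pi.single_eq_of_ne hk, if_neg]
    intro h
    exact hk (funext fun i => h i (Finset.mem_univ i))

lemma range_up {n : ℕ} (i : Fin n) (k : Fin n → ℤ) (hk : 0 ≤ k i ∧ k i < 2 * n)
    (h : (Pi.single k 1 : LL n) ∈ LinearMap.range (psi n)) :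
    (Pi.single (Function.update k i (k i + 1)) 1 : LL n) ∈ LinearMap.range (psi n) := by
  have hd : dd n (k i + 1) ≠ 0 := by
    unfold dd
    split_ifs
    · exact one_ne_zero
    · intro h
      have : ((k i + 1 - (2 * n + 1) : ℤ) : ℂ) = 0 := by push_cast at h ⊢; exact h
      have : (k i + 1 - (2 * n + 1) : ℤ) = 0 := by exact_mod_cast this
      omega
  have h1 := Submodule.smul_mem _ (dd n (k i + 1))⁻¹ (range_XO i h)
  convert h1 using 1
  funext k'
  rw [Pi.smul_apply, smul_eq_mul, XO_apply]
  by_cases hk' : k' = Function.update k i (k i + 1)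
  · subst hk'
    simp [hd]
  · rw [Pi.single_eq_of_ne hk', Pi.single_eq_of_ne]
    · simp
    · rintro rfl
      apply hk'
      simp

lemma range_down {n : ℕ} (i : Fin n) (k : Fin n → ℤ) (hk : 0 < k i ∧ k i ≤ 2 * n)
    (h : (Pi.single k 1 : LL n) ∈ LinearMap.range (psi n)) :
    (Pi.single (Function.update k i (k i - 1)) 1 : LL n) ∈ LinearMap.range (psi n) := by
  have hd : cc (k i) ≠ 0 := by
    unfold cc
    split_ifs
    · exact_mod_cast (by omega : k i ≠ 0)
    · exact one_ne_zero
  have h1 := Submodule.smul_mem _ (cc (k i))⁻¹ (range_YO i h)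
  convert h1 using 1
  funext k'
  rw [Pi.smul_apply, smul_eq_mul, YO_apply]
  by_cases hk' : k' = Function.update k i (k i - 1)
  · subst hk'
    simp [hd]
  · rw [Pi.single_eq_of_ne hk', Pi.single_eq_of_ne]
    · simp
    · rintro rfl
      apply hk'
      simp

lemma range_upd {n : ℕ} (i : Fin n) (k : Fin n → ℤ) (hk : 0 ≤ k i ∧ k i ≤ 2 * n)
    (h : (Pi.single k 1 : LL n) ∈ LinearMap.range (psi n)) (t : ℤ) (ht : 0 ≤ t ∧ t ≤ 2 * n) :
    (Pi.single (Function.update k i t) 1 : LL n) ∈ LinearMap.range (psi n) := by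
  have up : ∀ t, k i ≤ t → t ≤ 2 * n → (Pi.single (Function.update k i t) 1 : LL n) ∈ LinearMap.range (psi n) := by
    intro t ht
    induction t, ht using Int.leInduction with
    | base => intro _; simpa using h
    | succ t ht ih =>
      intro h2
      have := range_up i (Function.update k i t) (by simp; omega) (ih (by omega))
      simpa using this
  have down : ∀ t, t ≤ k i → 0 ≤ t → (Pi.single (Function.update k i t) 1 : LL n) ∈ LinearMap.range (psi n) := by
    intro t ht
    induction t, ht using Int.leInductionDown with
    | base => intro _; simpa using h
    | pred t ht ih =>
      intro h2
      have := range_down i (Function.update k i t) (by simp; omega) (ih (by omega))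
      simpa using this
  rcases le_total (k i) t with h1 | h1
  · exact up t h1 ht.2
  · exact down t h1 ht.1

lemma range_single {n : ℕ} (k : Fin n → ℤ) (hk : ∀ i, 0 ≤ k i ∧ k i ≤ 2 * n) :
    (Pi.single k 1 : LL n) ∈ LinearMap.range (psi n) := by
  classical
  have h1 : ∀ S : Finset (Fin n), (Pi.single (fun i => if i ∈ S then k i else od i) 1 : LL n) ∈ LinearMap.range (psi n) := by
    intro S
    induction S using Finset.induction_on with
    | empty => simpa using range_single_od n
    | insert a S ha ih =>
      have := range_upd a _ (by simp only [ha, if_false]; exact ⟨od_nonneg a, od_le a⟩) ih (k a) (hk a)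
      convert this using 2
      funext i
      by_cases hi : i = a
      · subst hi; simp
      · simp [hi]
  simpa using h1 Finset.univ

end DC

namespace DC

/-- functions on the box -/
abbrev L0 (n : ℕ) := (Fin n → Fin (2 * n + 1)) → ℂ

/-- inclusion of the box in the lattice -/
def bx {n : ℕ} (k : Fin n → Fin (2 * n + 1)) : Fin n → ℤ := fun i => ((k i : ℕ) : ℤ)

/-- The restriction of `psi` to the box. -/
noncomputable def psi0 (n : ℕ) : RR n →ₗ[ℂ] L0 n := (LinearMap.funLeft ℂ ℂ bx).comp (psi n)

lemma psi0_apply {n : ℕ} (f : RR n) (k) : psi0 n f k = psi n f (bx k) := rfl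

lemma psi0_surj (n : ℕ) : Function.Surjective (psi0 n) := by
  classical
  rw [← LinearMap.range_eq_top, eq_top_iff]
  rintro v -
  rw [show v = ∑ k, (LinearMap.single ℂ (fun _ => ℂ) k) (v k) from (Finset.univ_sum_single v).symm]
  refine Submodule.sum_mem _ fun k _ => ?_
  have h1 : (LinearMap.single ℂ (fun _ => ℂ) k) (v k) = v k • (Pi.single k 1 : L0 n) := by
    funext k'
    by_cases h : k' = k
    · subst h; simp
    · simp [h]
  rw [h1]
  refine Submodule.smul_mem _ _ ?_
  obtain ⟨f, hf⟩ := range_single (bx k) (fun i => by simp only [bx]; have := (k i).2; omega)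
  refine ⟨f, ?_⟩
  funext k'
  rw [psi0_apply, hf]
  by_cases h : k' = k
  · subst h; simp
  · rw [Pi.single_eq_of_ne h, Pi.single_eq_of_ne]
    intro hb
    apply h
    funext i
    have := congrFun hb i
    simp only [bx] at this
    apply Fin.ext
    exact_mod_cast this

/-- The `χ`-isotypic part: alternating functions supported on even points. -/
noncomputable def Chi0 (n : ℕ) : Submodule ℂ (L0 n) where
  carrier := {v | (∀ (σ : Equiv.Perm (Fin n)) k, v k = sg σ * v (k ∘ σ)) ∧ ∀ k, v k ≠ 0 → ∀ i, Even (k i : ℕ)}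
  add_mem' := by
    rintro u v ⟨hu1, hu2⟩ ⟨hv1, hv2⟩
    refine ⟨fun σ k => ?_, fun k hk i => ?_⟩
    · rw [Pi.add_apply, Pi.add_apply, hu1 σ k, hv1 σ k]; ring
    · by_cases h : u k = 0
      · by_cases h' : v k = 0
        · simp [h, h'] at hk
        · exact hv2 k h' i
      · exact hu2 k h i
  zero_mem' := by simp
  smul_mem' := by
    rintro c v ⟨hv1, hv2⟩
    refine ⟨fun σ k => ?_, fun k hk i => ?_⟩
    · rw [Pi.smul_apply, Pi.smul_apply, hv1 σ k]; simp only [smul_eq_mul]; ring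
    · exact hv2 k (right_ne_zero_of_mul hk) i

lemma finrank_Chi0 (n : ℕ) : Module.finrank ℂ (Chi0 n) ≤ n + 1 := by
  let pt : Fin (n + 1) → (Fin n → Fin (2 * n + 1)) := fun j i =>
    ⟨2 * (j.succAbove i : ℕ), by have := (j.succAbove i).2; omega⟩
  let φ : Chi0 n →ₗ[ℂ] (Fin (n + 1) → ℂ) := (LinearMap.funLeft ℂ ℂ pt).comp (Chi0 n).subtype
  have hφ : Function.Injective φ := by
    rw [injective_iff_map_eq_zero]
    rintro ⟨v, hmem⟩ hv
    have hv0 : ∀ j, v (pt j) = 0 := fun j => congrFun hv j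
    apply Subtype.ext
    change v = 0
    obtain ⟨hv1, hv2⟩ := hmem
    funext k
    by_contra hk
    simp only [Pi.zero_apply] at hk
    have h1 : ∀ i, ∃ t : Fin (n + 1), (k i : ℕ) = 2 * t := by
      intro i
      obtain ⟨r, hr⟩ := hv2 k hk i
      exact ⟨⟨r, by have := (k i).2; omega⟩, by simp; omega⟩
    choose t ht using h1
    have hinj : Function.Injective t := by
      intro i j hij
      by_contra hne
      exact hk (alt_zero v hv1 k hne (Fin.ext (by rw [ht, ht, hij])))
    have hns : ¬ Function.Surjective t := by
      intro hs
      have := Fintype.card_le_of_surjective t hs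
      simp at this
    simp only [Function.Surjective, not_forall, not_exists] at hns
    obtain ⟨j, hj⟩ := hns
    have h2 : ∀ i, ∃ l, j.succAbove l = t i := fun i => Fin.exists_succAbove_eq (hj i)
    choose τ hτ using h2
    have hτinj : Function.Injective τ := by
      intro a b hab
      apply hinj
      rw [← hτ, ← hτ, hab]
    have hbij : Function.Bijective τ := Finite.injective_iff_bijective.1 hτinj
    have h3 := hv1 (Equiv.ofBijective τ hbij).symm k
    have h4 : k ∘ (Equiv.ofBijective τ hbij).symm = pt j := by
      funext i
      apply Fin.ext
      simp only [Function.comp, ht, pt]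
      rw [← hτ]
      congr 3
      exact (Equiv.ofBijective τ hbij).apply_symm_apply i
    rw [h4, hv0, mul_zero] at h3
    exact hk h3
  have := LinearMap.finrank_le_finrank_of_injective hφ
  simpa using this

/-- all degrees are odd -/
def OddE {n : ℕ} (s : EE n) : Prop := ∀ i, Odd (s (Sum.inl i) + s (Sum.inr i))

open Classical in
/-- projection to the `χ`-isotypic part -/
noncomputable def ee (n : ℕ) : RR n →ₗ[ℂ] RR n :=
  (basisMonomials (Fin n ⊕ Fin n) ℂ).constr ℂ fun s =>
    if OddE s then ((n.factorial : ℂ)⁻¹) • ∑ σ : Equiv.Perm (Fin n), pm σ (monomial s 1) else 0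

open Classical in
lemma ee_mon {n : ℕ} (s : EE n) : ee n (monomial s 1) =
    if OddE s then ((n.factorial : ℂ)⁻¹) • ∑ σ : Equiv.Perm (Fin n), pm σ (monomial s 1) else 0 := by
  have := (basisMonomials (Fin n ⊕ Fin n) ℂ).constr_basis ℂ (fun s =>
    if OddE s then ((n.factorial : ℂ)⁻¹) • ∑ σ : Equiv.Perm (Fin n), pm σ (monomial s 1) else 0) s
  rw [coe_basisMonomials] at this
  exact this

lemma ee_AA {n d : ℕ} {f : RR n} (hf : f ∈ AA n d) : ee n f ∈ AA n d := by
  rw [mem_restrictSupport_iff] at hf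
  rw [f.as_sum, map_sum]
  refine Submodule.sum_mem _ fun s hs => ?_
  rw [mon_smul, map_smul, ee_mon]
  refine Submodule.smul_mem _ _ ?_
  split_ifs
  · refine Submodule.smul_mem _ _ (Submodule.sum_mem _ fun σ _ => ?_)
    rw [rename_monomial, mem_restrictSupport_iff]
    intro t ht
    have := support_monomial_subset ht
    simp only [Finset.mem_singleton] at this
    subst this
    have := hf hs
    simpa [Finsupp.degree_mapDomain] using this
  · exact zero_mem _

lemma oddE_map {n : ℕ} {s : EE n} (h : OddE s) (σ : Equiv.Perm (Fin n)) :
    OddE (Finsupp.mapDomain (Sum.map σ σ) s) := by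
  intro i
  have := h (σ.symm i)
  rw [← mapDomain_inl σ, ← mapDomain_inr σ] at this
  simpa using this

lemma psi0_ee {n : ℕ} (f : RR n) : psi0 n (ee n f) ∈ Chi0 n := by
  rw [f.as_sum, map_sum, map_sum]
  refine Submodule.sum_mem _ fun s hs => ?_
  rw [mon_smul, map_smul, map_smul, ee_mon]
  refine Submodule.smul_mem _ _ ?_
  split_ifs with hodd
  · rw [map_smul]
    refine Submodule.smul_mem _ _ ⟨fun τ k => ?_, fun k hk i => ?_⟩
    · rw [psi0_apply, psi0_apply, map_sum, Finset.sum_apply, Finset.sum_apply, Finset.mul_sum]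
      simp only [psi_pm]
      rw [← Equiv.sum_comp (Equiv.mulLeft τ)]
      refine Finset.sum_congr rfl fun σ _ => ?_
      rw [Equiv.coe_mulLeft, sg_mul, mul_assoc]
      rfl
    · rw [psi0_apply, map_sum, Finset.sum_apply] at hk
      obtain ⟨σ, -, h1⟩ := Finset.exists_ne_zero_of_sum_ne_zero hk
      rw [rename_monomial] at h1
      have h2 := psi_mon_parity _ _ h1 i
      have h3 := oddE_map hodd σ i
      simp only [bx] at h2
      have h2' : Odd ((k i : ℕ) + ((Finsupp.mapDomain (Sum.map σ σ) s) (Sum.inl i) + 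
        (Finsupp.mapDomain (Sum.map σ σ) s) (Sum.inr i))) := by
        rw [← add_assoc]
        exact_mod_cast h2
      rw [Nat.odd_add] at h2'
      by_contra hc
      rw [Nat.not_even_iff_odd, h2'] at hc
      exact (Nat.not_even_iff_odd.2 h3) hc
  · simp

/-- The bound obtained from a family of functionals `Lam`. -/
lemma combine {n : ℕ} {J : Type*} [Fintype J] (Lam : RR n →ₗ[ℂ] (J → ℂ)) (hsurj : Function.Surjective Lam)
    (hI : ∀ f ∈ I2 n, Lam f = 0) (he : ∀ f, Lam (ee n f) = Lam f) :
    (2 * n + 1) ^ n + Fintype.card J ≤ Module.finrank ℂ (RR n ⧸ diagIdeal n) + (n + 1) := by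
  let S : RR n →ₗ[ℂ] ((L0 n ⧸ Chi0 n) × (J → ℂ)) := ((Chi0 n).mkQ.comp (psi0 n)).prod Lam
  have hS1 : ∀ f, S (ee n f) = (0, Lam f) := by
    intro f
    refine Prod.ext ?_ (he f)
    change (Chi0 n).mkQ (psi0 n (ee n f)) = 0
    rw [Submodule.mkQ_apply, Submodule.Quotient.mk_eq_zero]
    exact psi0_ee f
  have hS2 : ∀ f, S (f - ee n f) = ((Chi0 n).mkQ (psi0 n f), 0) := by
    intro f
    rw [map_sub, hS1]
    refine Prod.ext ?_ ?_
    · change (Chi0 n).mkQ (psi0 n f) - 0 = _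
      rw [sub_zero]
    · change Lam f - Lam f = 0
      rw [sub_self]
  have h1 : Function.Surjective S := by
    rintro ⟨a, b⟩
    obtain ⟨v, rfl⟩ := (Chi0 n).mkQ_surjective a
    obtain ⟨f, rfl⟩ := psi0_surj n v
    obtain ⟨g, rfl⟩ := hsurj b
    refine ⟨(f - ee n f) + ee n g, ?_⟩
    rw [map_add, hS1, hS2]
    simp
  have h2 := filtered_bound S h1 (by
    intro f hf d hd
    obtain ⟨g, hg, hgf⟩ := psi_I2 hf hd
    refine ⟨g - ee n g, ?_, ?_⟩
    · have : g - ee n g ∈ AA n d := sub_mem hg (ee_AA hg)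
      rw [mem_restrictSupport_iff] at this
      exact fun s hs => this hs
    · rw [hS2]
      refine Prod.ext ?_ (hI f hf).symm
      change (Chi0 n).mkQ ((LinearMap.funLeft ℂ ℂ bx) (psi n g)) = (Chi0 n).mkQ ((LinearMap.funLeft ℂ ℂ bx) (psi n f))
      rw [hgf])
  rw [Module.finrank_prod, Module.finrank_fintype_fun_eq_card] at h2
  have h3 := Submodule.finrank_quotient_add_finrank (Chi0 n)
  rw [Module.finrank_fintype_fun_eq_card] at h3
  simp only [Fintype.card_pi, Fintype.card_fin, Finset.prod_const, Finset.card_univ] at h3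
  have h4 := finrank_Chi0 n
  omega

end DC

namespace DC

/-- `x_i^a y_i^b` -/
noncomputable def xx {n : ℕ} (i : Fin n) (g : ℕ × ℕ) : RR n :=
  X (Sum.inl i) ^ g.1 * X (Sum.inr i) ^ g.2

lemma xx_add {n : ℕ} (i : Fin n) (g g' : ℕ × ℕ) : xx i (g + g') = xx i g * xx i g' := by
  simp only [xx, Prod.fst_add, Prod.snd_add, pow_add]; ring

/-- polarized power sum -/
noncomputable def PS (n : ℕ) (g : ℕ × ℕ) : RR n := ∑ i, xx i g

/-- monomial symmetric sums -/
noncomputable def MM (n : ℕ) {r : ℕ} (G : Fin r → ℕ × ℕ) : RR n :=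
  ∑ s : Fin r ↪ Fin n, ∏ j, xx (s j) (G j)

/-- even pairs -/
def EvP (g : ℕ × ℕ) : Prop := Even (g.1 + g.2)

/-- the ideal generated by the even polarized power sums -/
noncomputable def JJ (n : ℕ) : Ideal (RR n) := Ideal.span {f | ∃ g, EvP g ∧ g ≠ 0 ∧ f = PS n g}

lemma MM_succ (n : ℕ) {r : ℕ} (G : Fin (r + 1) → ℕ × ℕ) :
    MM n G = PS n (G 0) * MM n (Fin.tail G) -
      ∑ j, MM n (Function.update (Fin.tail G) j (Fin.tail G j + G 0)) := by
  classical
  have h1 : MM n G = ∑ e : Fin r ↪ Fin n, ∑ i : {i // i ∉ Set.range e},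
      xx (i : Fin n) (G 0) * ∏ j, xx (e j) (Fin.tail G j) := by
    unfold MM
    rw [← Fintype.sum_sigma' (f := fun (e : Fin r ↪ Fin n) (i : {i // i ∉ Set.range e}) =>
      xx (i : Fin n) (G 0) * ∏ j, xx (e j) (Fin.tail G j))]
    refine Fintype.sum_equiv (Equiv.embeddingFinSucc r (Fin n)) _ _ fun s => ?_
    rw [Fin.prod_univ_succ]
    simp [Equiv.embeddingFinSucc_fst, Equiv.embeddingFinSucc_snd, Fin.tail]
  rw [h1, eq_sub_iff_add_eq]
  unfold PS MM
  rw [Finset.sum_mul_sum, Finset.sum_comm, Finset.sum_comm (s := Finset.univ (α := Fin n)),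
    ← Finset.sum_add_distrib]
  refine Finset.sum_congr rfl fun e _ => ?_
  rw [← Fintype.sum_subtype_add_sum_subtype (fun i => i ∈ Set.range e), add_comm]
  refine congrArg₂ (· + ·) ?_ (Finset.sum_congr (by ext; simp) fun _ _ => rfl)
  have hbij : Function.Bijective (fun j : Fin r => (⟨e j, j, rfl⟩ : {i // i ∈ Set.range e})) := by
    refine ⟨fun a b hab => e.injective (congrArg Subtype.val hab), ?_⟩
    rintro ⟨_, j, rfl⟩
    exact ⟨j, rfl⟩
  refine Finset.sum_bijective _ hbij (by simp) fun j _ => ?_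
  rw [← Finset.mul_prod_erase _ _ (Finset.mem_univ j), ← Finset.mul_prod_erase _ _ (Finset.mem_univ j),
    Function.update_self, xx_add]
  rw [Finset.prod_congr rfl (g := fun x => xx (e x) (Fin.tail G x))
    (fun x hx => by rw [Function.update_of_ne (Finset.ne_of_mem_erase hx)])]
  ring

lemma evp_add {g h : ℕ × ℕ} (hg : EvP g) (hh : EvP h) : EvP (g + h) := by
  have := Even.add hg hh
  have e : (g + h).1 + (g + h).2 = (g.1 + g.2) + (h.1 + h.2) := by
    simp only [Prod.fst_add, Prod.snd_add]; ring
  rw [EvP, e]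
  exact this

lemma MM_mem (n : ℕ) : ∀ {r : ℕ} (G : Fin r → ℕ × ℕ), (∀ j, EvP (G j)) → (∃ j, G j ≠ 0) → MM n G ∈ JJ n
  | 0, G, _, ⟨j, _⟩ => j.elim0
  | r + 1, G, hev, hne => by
    rw [MM_succ]
    by_cases h0 : G 0 = 0
    · obtain ⟨j, hj⟩ := hne
      have hj0 : j ≠ 0 := by rintro rfl; exact hj h0
      obtain ⟨j', rfl⟩ := Fin.exists_succ_eq.2 hj0
      have h1 : MM n (Fin.tail G) ∈ JJ n := MM_mem n _ (fun j => hev _) ⟨j', hj⟩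
      refine sub_mem (Ideal.mul_mem_left _ _ h1) (Ideal.sum_mem _ fun j _ => ?_)
      rw [h0, add_zero, Function.update_eq_self]
      exact h1
    · refine sub_mem (Ideal.mul_mem_right _ _ (Ideal.subset_span ⟨_, hev 0, h0, rfl⟩))
        (Ideal.sum_mem _ fun j _ => ?_)
      refine MM_mem n _ (fun k => ?_) ⟨j, ?_⟩
      · by_cases hk : k = j
        · subst hk; rw [Function.update_self]; exact evp_add (hev _) (hev _)
        · rw [Function.update_of_ne hk]; exact hev _
      · rw [Function.update_self]
        intro h
        exact h0 (add_eq_zero.1 h).2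

lemma mon_xx {n : ℕ} (s : EE n) : (monomial s 1 : RR n) = ∏ j, xx j (s (Sum.inl j), s (Sum.inr j)) := by
  rw [monomial_eq, Finsupp.prod_fintype _ _ (by simp), Fintype.prod_sum_type]
  simp [xx, Finset.prod_mul_distrib]

lemma sum_pm {n : ℕ} (s : EE n) : ∑ σ : Equiv.Perm (Fin n), pm σ (monomial s 1) =
    MM n (fun j => (s (Sum.inl j), s (Sum.inr j))) := by
  unfold MM
  refine Fintype.sum_equiv (Equiv.embeddingEquivOfFinite (Fin n)).symm _ _ fun σ => ?_
  rw [mon_xx, map_prod]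
  refine Finset.prod_congr rfl fun j _ => ?_
  simp only [xx, map_mul, map_pow, rename_X]
  rfl

lemma pinv_mem {n : ℕ} {h : RR n} {e : ℕ} (hp : PInv n h) (hh : h.IsHomogeneous e) (he : 0 < e) :
    h ∈ JJ n := by
  have h1 : (n.factorial : ℂ) • h = ∑ σ : Equiv.Perm (Fin n), pm σ h := by
    simp_rw [hp.1]
    rw [Finset.sum_const, Finset.card_univ, Fintype.card_perm, Fintype.card_fin, Nat.cast_smul_eq_nsmul]
  have h2 : ∑ σ : Equiv.Perm (Fin n), pm σ h ∈ JJ n := by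
    have h0 : ∑ σ : Equiv.Perm (Fin n), pm σ h =
        ∑ σ : Equiv.Perm (Fin n), ∑ s ∈ h.support, coeff s h • pm σ (monomial s 1) := by
      refine Finset.sum_congr rfl fun σ _ => ?_
      conv_lhs => rw [h.as_sum, map_sum]
      refine Finset.sum_congr rfl fun s _ => ?_
      rw [mon_smul, map_smul]
    rw [h0, Finset.sum_comm]
    refine Ideal.sum_mem _ fun s hs => ?_
    have hs' := mem_support_iff.1 hs
    rw [← Finset.smul_sum, sum_pm, MvPolynomial.smul_eq_C_mul]
    refine Ideal.mul_mem_left _ _ (MM_mem n _ (fun j => hp.2 s hs' j) ?_)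
    by_contra hc
    push Not at hc
    have : s = 0 := by
      ext j
      rcases j with j | j
      · exact congrArg Prod.fst (hc j)
      · exact congrArg Prod.snd (hc j)
    have h3 := hh hs'
    subst this
    simp at h3
    omega
  have hn : (n.factorial : ℂ) ≠ 0 := by exact_mod_cast n.factorial_ne_zero
  have h4 : h = C ((n.factorial : ℂ)⁻¹) * ∑ σ : Equiv.Perm (Fin n), pm σ h := by
    rw [← h1, ← MvPolynomial.smul_eq_C_mul, smul_smul, inv_mul_cancel₀ hn, one_smul]
  rw [h4]
  exact Ideal.mul_mem_left _ _ h2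

lemma kill_I2 {n : ℕ} (lam : RR n →ₗ[ℂ] ℂ)
    (H : ∀ (s : EE n) (g : ℕ × ℕ), EvP g → g ≠ 0 → lam (monomial s 1 * PS n g) = 0) :
    ∀ f ∈ I2 n, lam f = 0 := by
  have h1 : ∀ g, EvP g → g ≠ 0 → ∀ f, lam (f * PS n g) = 0 := by
    intro g hg hg0 f
    rw [f.as_sum, Finset.sum_mul, map_sum]
    refine Finset.sum_eq_zero fun s _ => ?_
    rw [mon_smul, smul_mul_assoc, map_smul, H s g hg hg0, smul_zero]
  have h2 : ∀ h ∈ JJ n, ∀ f, lam (f * h) = 0 := by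
    intro h hh
    unfold JJ at hh
    induction hh using Submodule.span_induction with
    | mem x hx =>
      obtain ⟨g, hg, hg0, rfl⟩ := hx
      exact h1 g hg hg0
    | zero => simp
    | add x y _ _ hx hy => intro f; rw [mul_add, map_add, hx, hy, add_zero]
    | smul a x _ hx => intro f; rw [smul_eq_mul, ← mul_assoc, hx]
  intro f hf
  unfold I2 at hf
  induction hf using Submodule.span_induction with
  | mem x hx =>
    obtain ⟨s, h, e, hp, hh, he, rfl⟩ := hx
    exact h2 h (pinv_mem hp hh he) _
  | zero => simp
  | add x y _ _ hx hy => rw [map_add, hx, hy, add_zero]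
  | smul a x _ hx => rw [map_smul, hx, smul_zero]

end DC

namespace DC

/-- polynomial ring in the `z_{ab}` -/
abbrev ZZ := MvPolynomial (ℕ × ℕ) ℂ

/-- lowering derivation -/
noncomputable def Dg (g : ℕ × ℕ) : Derivation ℂ ZZ ZZ :=
  mkDerivation ℂ fun p => if g.1 ≤ p.1 ∧ g.2 ≤ p.2 then X (p.1 - g.1, p.2 - g.2) else 0

lemma Dg_X (g p : ℕ × ℕ) : Dg g (X p) =
    if g.1 ≤ p.1 ∧ g.2 ≤ p.2 then X (p.1 - g.1, p.2 - g.2) else 0 := mkDerivation_X _ _ _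

lemma cc_Dg (g : ℕ × ℕ) (f : ZZ) : constantCoeff (Dg g f) = 0 := by
  induction f using MvPolynomial.induction_on with
  | C a => simp
  | add p q hp hq => rw [map_add, map_add, hp, hq, add_zero]
  | mul_X p i hp =>
    rw [Derivation.leibniz, Dg_X]
    simp only [smul_eq_mul, map_add, map_mul, hp, mul_zero, add_zero]
    split_ifs <;> simp

lemma pderiv_Dg (g m : ℕ × ℕ) (f : ZZ) :
    pderiv m (Dg g f) = Dg g (pderiv m f) + pderiv (m + g) f := by
  classical
  have h : ⁅pderiv (R := ℂ) m, Dg g⁆ = pderiv (m + g) := by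
    apply MvPolynomial.derivation_ext
    intro p
    rw [Derivation.commutator_apply, Dg_X, pderiv_X, pderiv_X]
    have h1 : Dg g ((Pi.single m (1 : ZZ) : ℕ × ℕ → ZZ) p) = 0 := by
      by_cases hp : p = m
      · subst hp; simp
      · simp [hp]
    rw [Pi.single_apply] at h1
    rw [Pi.single_apply, h1, sub_zero, Pi.single_apply]
    obtain ⟨p1, p2⟩ := p
    obtain ⟨m1, m2⟩ := m
    obtain ⟨g1, g2⟩ := g
    simp only [Prod.mk_add_mk, Prod.mk.injEq]
    split_ifs with h2 h3 h3
    · rw [pderiv_X, Pi.single_apply, if_pos]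
      simp only [Prod.mk.injEq]; omega
    · rw [pderiv_X, Pi.single_apply, if_neg]
      simp only [Prod.mk.injEq]; omega
    · omega
    · simp
  have := congrArg (fun D : Derivation ℂ ZZ ZZ => D f) h
  simp only [Derivation.commutator_apply] at this
  rw [← this]; ring

/-- iterated derivative -/
noncomputable def PF : {r : ℕ} → (Fin r → ℕ × ℕ) → ZZ → ZZ
  | 0, _, f => f
  | _ + 1, m, f => pderiv (m 0) (PF (Fin.tail m) f)

lemma PF_Dg (g : ℕ × ℕ) : ∀ {r : ℕ} (m : Fin r → ℕ × ℕ) (f : ZZ),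
    PF m (Dg g f) = Dg g (PF m f) + ∑ i, PF (Function.update m i (m i + g)) f
  | 0, m, f => by simp [PF]
  | r + 1, m, f => by
    rw [Fin.sum_univ_succ]
    simp only [PF]
    rw [PF_Dg g (Fin.tail m) f, map_add, pderiv_Dg, map_sum, Fin.tail_update_zero, Function.update_self]
    rw [add_assoc]
    congr 2
    refine Finset.sum_congr rfl fun i _ => ?_
    rw [Fin.tail_update_succ, Function.update_of_ne (Fin.succ_ne_zero i).symm]
    rfl

/-- product of factorials -/
def fac (μ : (ℕ × ℕ) →₀ ℕ) : ℕ := μ.prod fun _ k => k.factorial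

lemma fac_ne (μ : (ℕ × ℕ) →₀ ℕ) : (fac μ : ℂ) ≠ 0 := by
  unfold fac Finsupp.prod
  exact_mod_cast Finset.prod_ne_zero_iff.2 fun i _ => Nat.factorial_ne_zero _

lemma fac_add (μ : (ℕ × ℕ) →₀ ℕ) (p : ℕ × ℕ) : fac (μ + Finsupp.single p 1) = fac μ * (μ p + 1) := by
  classical
  have h1 : ∀ ν : (ℕ × ℕ) →₀ ℕ, ν.support ⊆ insert p μ.support →
      fac ν = (∏ i ∈ (insert p μ.support).erase p, (ν i).factorial) * (ν p).factorial := by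
    intro ν hν
    rw [Finset.prod_erase_mul _ _ (Finset.mem_insert_self _ _)]
    exact Finsupp.prod_of_support_subset _ hν _ (by simp)
  rw [h1 μ (Finset.subset_insert _ _), h1 (μ + Finsupp.single p 1)]
  · simp only [Finsupp.add_apply, Finsupp.single_eq_same, Nat.factorial_succ]
    rw [Finset.prod_congr rfl (g := fun i => (μ i).factorial)]
    · ring
    · intro i hi
      rw [Finsupp.single_eq_of_ne (Finset.ne_of_mem_erase hi), add_zero]
  · intro i hi
    by_cases h : i = p
    · simp [h]
    · simp only [Finsupp.mem_support_iff, Finsupp.add_apply, Finsupp.single_eq_of_ne h, add_zero] at hi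
      simp [hi]

/-- type of a tuple -/
noncomputable def typ {r : ℕ} (m : Fin r → ℕ × ℕ) : (ℕ × ℕ) →₀ ℕ := ∑ i, Finsupp.single (m i) 1

lemma PF_coeff : ∀ {r : ℕ} (m : Fin r → ℕ × ℕ) (f : ZZ) (μ : (ℕ × ℕ) →₀ ℕ),
    coeff μ (PF m f) * fac μ = fac (μ + typ m) * coeff (μ + typ m) f
  | 0, m, f, μ => by simp [PF, typ]; ring
  | r + 1, m, f, μ => by
    have h1 := PF_coeff (Fin.tail m) f (μ + Finsupp.single (m 0) 1)
    have h2 : μ + typ m = μ + Finsupp.single (m 0) 1 + typ (Fin.tail m) := by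
      rw [typ, Fin.sum_univ_succ, add_assoc]; rfl
    rw [h2, ← h1, PF, coeff_pderiv, fac_add]
    push_cast
    ring

/-- normalized coefficient -/
noncomputable def val (μ : (ℕ × ℕ) →₀ ℕ) (f : ZZ) : ℂ := fac μ * coeff μ f

lemma val_typ {r : ℕ} (m : Fin r → ℕ × ℕ) (f : ZZ) : val (typ m) f = constantCoeff (PF m f) := by
  have := PF_coeff m f 0
  rw [zero_add] at this
  rw [val, ← this]
  simp [fac, constantCoeff_eq]

lemma val_update {r : ℕ} (m : Fin r → ℕ × ℕ) (g : ℕ × ℕ) (f : ZZ) (hf : Dg g f = 0) :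
    ∑ i, val (typ (Function.update m i (m i + g))) f = 0 := by
  have h := congrArg constantCoeff (PF_Dg g m f)
  have h0 : PF m (0 : ZZ) = PF m (Dg g (0 : ZZ)) := by rw [map_zero]
  have h1 : constantCoeff (PF m (0 : ZZ)) = 0 := by
    rw [← val_typ]; simp [val]
  rw [hf, h1, map_add, cc_Dg, zero_add, map_sum] at h
  rw [h]
  exact Finset.sum_congr rfl fun i _ => val_typ _ _

/-- the tuple of an exponent -/
def tup {n : ℕ} (s : EE n) : Fin n → ℕ × ℕ := fun i => (s (Sum.inl i), s (Sum.inr i))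

/-- functional attached to a polynomial -/
noncomputable def lam (n : ℕ) (φ : ZZ) : RR n →ₗ[ℂ] ℂ :=
  (basisMonomials (Fin n ⊕ Fin n) ℂ).constr ℂ fun s => val (typ (tup s)) φ

lemma lam_mon {n : ℕ} (φ : ZZ) (s : EE n) : lam n φ (monomial s 1) = val (typ (tup s)) φ := by
  have := (basisMonomials (Fin n ⊕ Fin n) ℂ).constr_basis ℂ (fun s => val (typ (tup s)) φ) s
  rw [coe_basisMonomials] at this
  exact this

lemma lam_kill {n : ℕ} {φ : ZZ} (H : ∀ g, EvP g → g ≠ 0 → Dg g φ = 0) : ∀ f ∈ I2 n, lam n φ f = 0 := by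
  classical
  refine kill_I2 _ fun s g hg hg0 => ?_
  rw [PS, Finset.mul_sum, map_sum, ← val_update (tup s) g φ (H g hg hg0)]
  refine Finset.sum_congr rfl fun i _ => ?_
  have h1 : monomial s 1 * xx i g =
      (monomial (s + (Finsupp.single (Sum.inl i) g.1 + Finsupp.single (Sum.inr i) g.2)) 1 : RR n) := by
    rw [xx, X_pow_eq_monomial, X_pow_eq_monomial, monomial_mul, monomial_mul]; simp
  rw [h1, lam_mon]
  congr 2
  funext j
  by_cases hj : j = i
  · subst hj; simp [tup]; rfl
  · rw [Function.update_of_ne hj]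
    simp [tup, Ne.symm hj]

lemma lam_ee {n : ℕ} {φ : ZZ} (H : ∀ μ, coeff μ φ ≠ 0 → ∀ p, μ p ≠ 0 → Odd (p.1 + p.2)) (f : RR n) :
    lam n φ (ee n f) = lam n φ f := by
  classical
  rw [f.as_sum, map_sum, map_sum, map_sum]
  refine Finset.sum_congr rfl fun s _ => ?_
  rw [mon_smul, map_smul, map_smul, map_smul, ee_mon]
  congr 1
  split_ifs with hs
  · rw [map_smul, map_sum]
    have h1 : ∀ σ : Equiv.Perm (Fin n), lam n φ (pm σ (monomial s 1)) = lam n φ (monomial s 1) := by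
      intro σ
      rw [rename_monomial, lam_mon, lam_mon]
      congr 1
      unfold typ
      rw [← Equiv.sum_comp σ]
      refine Finset.sum_congr rfl fun i _ => ?_
      rw [tup, tup, mapDomain_inl, mapDomain_inr]
    simp_rw [h1]
    rw [Finset.sum_const, Finset.card_univ, Fintype.card_perm, Fintype.card_fin,
      ← Nat.cast_smul_eq_nsmul ℂ, smul_smul, inv_mul_cancel₀, one_smul]
    exact_mod_cast n.factorial_ne_zero
  · rw [map_zero, lam_mon, val]
    by_contra h0
    apply hs
    intro i
    refine H _ (right_ne_zero_of_mul (Ne.symm h0)) (tup s i) ?_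
    have : typ (tup s) (tup s i) = ∑ j, Finsupp.single (tup s j) 1 (tup s i) := by
      rw [typ, Finsupp.finsetSum_apply]
    rw [this]
    intro hz
    have := Finset.sum_eq_zero_iff.1 hz i (Finset.mem_univ i)
    simp at this

lemma exists_typ' : ∀ {n : ℕ} (μ : (ℕ × ℕ) →₀ ℕ), μ.degree = n → ∃ m : Fin n → ℕ × ℕ, typ m = μ
  | 0, μ, h => by
    rw [Finsupp.degree_eq_zero_iff] at h
    exact ⟨fun _ => 0, by simp [typ, h]⟩
  | n + 1, μ, h => by
    have h0 : μ ≠ 0 := by rintro rfl; simp at h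
    obtain ⟨p, hp⟩ := Finsupp.ne_iff.1 h0
    have h1 : Finsupp.single p 1 ≤ μ := by
      rw [Finsupp.single_le_iff]
      exact Nat.one_le_iff_ne_zero.2 hp
    obtain ⟨ν, rfl⟩ := exists_add_of_le h1
    rw [map_add, Finsupp.degree_single] at h
    obtain ⟨m, hm⟩ := exists_typ' (n := n) ν (by omega)
    refine ⟨Fin.cons p m, ?_⟩
    rw [typ, Fin.sum_univ_succ]
    simp only [Fin.cons_zero, Fin.cons_succ]
    rw [← hm, typ]

lemma exists_typ {n : ℕ} (μ : (ℕ × ℕ) →₀ ℕ) (h : μ.degree = n) : ∃ s : EE n, typ (tup s) = μ := by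
  obtain ⟨m, hm⟩ := exists_typ' μ h
  refine ⟨Finsupp.equivFunOnFinite.symm (Sum.elim (fun i => (m i).1) (fun i => (m i).2)), ?_⟩
  rw [← hm]
  rfl

lemma eq_zero_of_lam {n : ℕ} {φ : ZZ} (hφ : φ.IsHomogeneous n) (h : lam n φ = 0) : φ = 0 := by
  ext μ
  rw [coeff_zero]
  by_contra h0
  have hd : μ.degree = n := by
    have := hφ h0
    rwa [Finsupp.degree_eq_weight_one]
  obtain ⟨s, hs⟩ := exists_typ μ hd
  have h1 := lam_mon (n := n) φ s
  rw [h, hs, val] at h1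
  exact mul_ne_zero (fac_ne μ) h0 h1.symm

end DC

namespace DC

/-- The variables. -/
noncomputable abbrev z (a b : ℕ) : ZZ := X (a, b)

/-- common kernel of the derivations -/
noncomputable def KK : Subalgebra ℂ ZZ where
  carrier := {f | ∀ g, EvP g → g ≠ 0 → Dg g f = 0}
  mul_mem' := by
    intro f h hf hh g hg hg0
    rw [Derivation.leibniz, hf g hg hg0, hh g hg hg0]; simp
  add_mem' := by
    intro f h hf hh g hg hg0
    rw [map_add, hf g hg hg0, hh g hg hg0]; simp
  algebraMap_mem' := by
    intro r g _ _
    exact Derivation.map_algebraMap _ r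

/-- cubic form -/
noncomputable def cv : ZZ := z 3 0 * z 0 1 ^ 3 - z 2 1 * z 0 1 ^ 2 * z 1 0 + z 1 2 * z 0 1 * z 1 0 ^ 2
  - z 0 3 * z 1 0 ^ 3

/-- quintic form -/
noncomputable def fv : ZZ := z 5 0 * z 0 1 ^ 5 - z 4 1 * z 0 1 ^ 4 * z 1 0 + z 3 2 * z 0 1 ^ 3 * z 1 0 ^ 2
  - z 2 3 * z 0 1 ^ 2 * z 1 0 ^ 3 + z 1 4 * z 0 1 * z 1 0 ^ 4 - z 0 5 * z 1 0 ^ 5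

/-- partial derivative -/
noncomputable def cx : ZZ := 3 * z 3 0 * z 0 1 ^ 2 - 2 * z 2 1 * z 0 1 * z 1 0 + z 1 2 * z 1 0 ^ 2
/-- partial derivative -/
noncomputable def cy : ZZ := z 2 1 * z 0 1 ^ 2 - 2 * z 1 2 * z 0 1 * z 1 0 + 3 * z 0 3 * z 1 0 ^ 2

/-- invariant of degree 7 -/
noncomputable def px : ZZ := z 1 0 * fv - cv * cx
/-- invariant of degree 7 -/
noncomputable def py : ZZ := z 0 1 * fv - cv * cy

lemma ev_cases {g : ℕ × ℕ} (h : EvP g) (h0 : g ≠ 0) :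
    g = (2, 0) ∨ g = (1, 1) ∨ g = (0, 2) ∨ g = (4, 0) ∨ g = (3, 1) ∨ g = (2, 2) ∨ g = (1, 3) ∨ g = (0, 4)
     ∨ 6 ≤ g.1 + g.2 := by
  obtain ⟨c, d⟩ := g
  simp only [EvP, ne_eq, Prod.mk_eq_zero, Prod.mk.injEq] at *
  obtain ⟨r, hr⟩ := h
  have : c ≤ 5 ∨ 6 ≤ c + d := by omega
  omega

lemma Dg_big {g : ℕ × ℕ} (h : 6 ≤ g.1 + g.2) (a b : ℕ) (hab : a + b ≤ 5) : Dg g (z a b) = 0 := by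
  rw [Dg_X, if_neg]
  simp only
  omega

lemma z10_mem : z 1 0 ∈ KK := by
  intro g hg hg0
  rcases ev_cases hg hg0 with rfl | rfl | rfl | rfl | rfl | rfl | rfl | rfl | h
  on_goal 9 => exact Dg_big h _ _ (by norm_num)
  all_goals simp [Dg_X]

lemma z01_mem : z 0 1 ∈ KK := by
  intro g hg hg0
  rcases ev_cases hg hg0 with rfl | rfl | rfl | rfl | rfl | rfl | rfl | rfl | h
  on_goal 9 => exact Dg_big h _ _ (by norm_num)
  all_goals simp [Dg_X]

lemma Dg_ofNat (g : ℕ × ℕ) (k : ℕ) [k.AtLeastTwo] : Dg g (OfNat.ofNat k : ZZ) = 0 :=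
  Derivation.map_natCast _ _

lemma cv_mem : cv ∈ KK := by
  intro g hg hg0
  have ha := z10_mem g hg hg0
  have hb := z01_mem g hg hg0
  simp only [cv, map_add, map_sub, Derivation.leibniz, Derivation.leibniz_pow, smul_eq_mul, ha, hb,
    mul_zero, smul_zero, zero_add, add_zero]
  rcases ev_cases hg hg0 with rfl | rfl | rfl | rfl | rfl | rfl | rfl | rfl | h
  on_goal 9 => simp [Dg_big h]
  all_goals simp [Dg_X]
  all_goals ring

lemma px_mem : px ∈ KK := by
  intro g hg hg0
  have ha := z10_mem g hg hg0
  have hb := z01_mem g hg hg0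
  simp only [px, cv, fv, cx, map_add, map_sub, Derivation.leibniz, Derivation.leibniz_pow, smul_eq_mul, ha, hb,
    mul_zero, smul_zero, zero_add, add_zero, Dg_ofNat g 2, Dg_ofNat g 3]
  rcases ev_cases hg hg0 with rfl | rfl | rfl | rfl | rfl | rfl | rfl | rfl | h
  on_goal 9 => simp [Dg_big h]
  all_goals simp [Dg_X]
  all_goals ring

lemma py_mem : py ∈ KK := by
  intro g hg hg0
  have ha := z10_mem g hg hg0
  have hb := z01_mem g hg hg0
  simp only [py, cv, fv, cy, map_add, map_sub, Derivation.leibniz, Derivation.leibniz_pow, smul_eq_mul, ha, hb,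
    mul_zero, smul_zero, zero_add, add_zero, Dg_ofNat g 2, Dg_ofNat g 3]
  rcases ev_cases hg hg0 with rfl | rfl | rfl | rfl | rfl | rfl | rfl | rfl | h
  on_goal 9 => simp [Dg_big h]
  all_goals simp [Dg_X]
  all_goals ring

/-- subalgebra generated by odd variables -/
noncomputable abbrev OO : Subalgebra ℂ ZZ := supported ℂ {p : ℕ × ℕ | Odd (p.1 + p.2)}

lemma z_OO (a b : ℕ) (h : Odd (a + b)) : z a b ∈ OO := (X_mem_supported).2 h

lemma oo_coeff {φ : ZZ} (h : φ ∈ OO) : ∀ μ, coeff μ φ ≠ 0 → ∀ p, μ p ≠ 0 → Odd (p.1 + p.2) := by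
  intro μ hμ p hp
  rw [mem_supported] at h
  exact h ((mem_vars_iff_mem_support p).2 ⟨μ, mem_support_iff.2 hμ, Finsupp.mem_support_iff.2 hp⟩)

lemma cv_OO : cv ∈ OO := by
  unfold cv
  repeat' (first | exact ofNat_mem _ _ | with_reducible apply pow_mem | with_reducible apply sub_mem | with_reducible apply add_mem | with_reducible apply mul_mem)
  all_goals
    rw [X_mem_supported]
    decide

lemma px_OO : px ∈ OO := by
  unfold px cv fv cx
  repeat' (first | exact ofNat_mem _ _ | with_reducible apply pow_mem | with_reducible apply sub_mem | with_reducible apply add_mem | with_reducible apply mul_mem)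
  all_goals
    rw [X_mem_supported]
    decide

lemma py_OO : py ∈ OO := by
  unfold py cv fv cy
  repeat' (first | exact ofNat_mem _ _ | with_reducible apply pow_mem | with_reducible apply sub_mem | with_reducible apply add_mem | with_reducible apply mul_mem)
  all_goals
    rw [X_mem_supported]
    decide

lemma z_hom (a b : ℕ) : (z a b).IsHomogeneous 1 := isHomogeneous_X _ _

lemma hmul {f g : ZZ} {a b c : ℕ} (hf : f.IsHomogeneous a) (hg : g.IsHomogeneous b) (h : a + b = c) :
    (f * g).IsHomogeneous c := h ▸ hf.mul hg

lemma hzp (a b k : ℕ) : (z a b ^ k).IsHomogeneous k := by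
  simpa using (z_hom a b).pow k

lemma hnum (k : ℕ) [k.AtLeastTwo] : (OfNat.ofNat k : ZZ).IsHomogeneous 0 := by
  have := isHomogeneous_C (ℕ × ℕ) (OfNat.ofNat k : ℂ)
  rwa [map_ofNat] at this

lemma cv_hom : cv.IsHomogeneous 4 := by
  unfold cv
  refine ((IsHomogeneous.sub ?_ ?_).add ?_).sub ?_
  · exact hmul (z_hom _ _) (hzp _ _ _) rfl
  · exact hmul (hmul (z_hom _ _) (hzp _ _ _) rfl) (z_hom _ _) rfl
  · exact hmul (hmul (z_hom _ _) (z_hom _ _) rfl) (hzp _ _ _) rfl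
  · exact hmul (z_hom _ _) (hzp _ _ _) rfl

lemma fv_hom : fv.IsHomogeneous 6 := by
  unfold fv
  refine ((((IsHomogeneous.sub ?_ ?_).add ?_).sub ?_).add ?_).sub ?_
  · exact hmul (z_hom _ _) (hzp _ _ _) rfl
  · exact hmul (hmul (z_hom _ _) (hzp _ _ _) rfl) (z_hom _ _) rfl
  · exact hmul (hmul (z_hom _ _) (hzp _ _ _) rfl) (hzp _ _ _) rfl
  · exact hmul (hmul (z_hom _ _) (hzp _ _ _) rfl) (hzp _ _ _) rfl
  · exact hmul (hmul (z_hom _ _) (z_hom _ _) rfl) (hzp _ _ _) rfl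
  · exact hmul (z_hom _ _) (hzp _ _ _) rfl

lemma cx_hom : cx.IsHomogeneous 3 := by
  unfold cx
  refine (IsHomogeneous.sub ?_ ?_).add ?_
  · exact hmul (hmul (hnum _) (z_hom _ _) rfl) (hzp _ _ _) rfl
  · exact hmul (hmul (hmul (hnum _) (z_hom _ _) rfl) (z_hom _ _) rfl) (z_hom _ _) rfl
  · exact hmul (z_hom _ _) (hzp _ _ _) rfl

lemma cy_hom : cy.IsHomogeneous 3 := by
  unfold cy
  refine (IsHomogeneous.sub ?_ ?_).add ?_
  · exact hmul (z_hom _ _) (hzp _ _ _) rfl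
  · exact hmul (hmul (hmul (hnum _) (z_hom _ _) rfl) (z_hom _ _) rfl) (z_hom _ _) rfl
  · exact hmul (hmul (hnum _) (z_hom _ _) rfl) (hzp _ _ _) rfl

lemma px_hom : px.IsHomogeneous 7 := (hmul (z_hom _ _) fv_hom rfl).sub (hmul cv_hom cx_hom rfl)
lemma py_hom : py.IsHomogeneous 7 := (hmul (z_hom _ _) fv_hom rfl).sub (hmul cv_hom cy_hom rfl)

/-- first family -/
noncomputable def ph0 (n i a : ℕ) : ZZ := z 1 0 ^ a * z 0 1 ^ (n - 4 * i - a) * cv ^ i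

/-- second family -/
noncomputable def ph1 (n i a : ℕ) : ZZ :=
  if a = 0 then z 0 1 ^ (n - 4 * i - 7) * cv ^ i * py
  else z 1 0 ^ (a - 1) * z 0 1 ^ (n - 4 * i - 6 - a) * cv ^ i * px

lemma ph0_hom {n i a : ℕ} (h : 4 * i + a ≤ n) : (ph0 n i a).IsHomogeneous n :=
  hmul (hmul (hzp _ _ _) (hzp _ _ _) rfl) (cv_hom.pow i) (by omega)

lemma ph1_hom {n i a : ℕ} (h : 4 * i + a + 6 ≤ n) (h' : 4 * i + 7 ≤ n) : (ph1 n i a).IsHomogeneous n := by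
  unfold ph1
  split_ifs with h0
  · exact hmul (hmul (hzp _ _ _) (cv_hom.pow i) rfl) py_hom (by omega)
  · exact hmul (hmul (hmul (hzp _ _ _) (hzp _ _ _) rfl) (cv_hom.pow i) rfl) px_hom (by omega)

lemma ph0_mem {A : Subalgebra ℂ ZZ} (h1 : z 1 0 ∈ A) (h2 : z 0 1 ∈ A) (h3 : cv ∈ A) (n i a : ℕ) :
    ph0 n i a ∈ A := mul_mem (mul_mem (pow_mem h1 _) (pow_mem h2 _)) (pow_mem h3 _)

lemma ph1_mem {A : Subalgebra ℂ ZZ} (h1 : z 1 0 ∈ A) (h2 : z 0 1 ∈ A) (h3 : cv ∈ A) (h4 : px ∈ A) (h5 : py ∈ A)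
    (n i a : ℕ) : ph1 n i a ∈ A := by
  unfold ph1
  split_ifs
  · exact mul_mem (mul_mem (pow_mem h2 _) (pow_mem h3 _)) h5
  · exact mul_mem (mul_mem (mul_mem (pow_mem h1 _) (pow_mem h2 _)) (pow_mem h3 _)) h4

/-- specialisation -/
noncomputable def spe : ZZ →ₐ[ℂ] MvPolynomial (Fin 3) ℂ := aeval fun p =>
  if p = (1, 0) then X 0 else if p = (0, 1) then 1 else if p = (3, 0) then X 1 else if p = (5, 0) then X 2 else 0

/-- monomials in three variables -/
noncomputable def m3 (a i s : ℕ) : MvPolynomial (Fin 3) ℂ := X 0 ^ a * X 1 ^ i * X 2 ^ s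

/-- exponents in three variables -/
noncomputable def e3 (a i s : ℕ) : Fin 3 →₀ ℕ := Finsupp.single 0 a + Finsupp.single 1 i + Finsupp.single 2 s

lemma coeff_m3 (a i s a' i' s' : ℕ) : coeff (e3 a' i' s') (m3 a i s) =
    if a = a' ∧ i = i' ∧ s = s' then 1 else 0 := by
  classical
  have : m3 a i s = monomial (e3 a i s) 1 := by
    rw [m3, X_pow_eq_monomial, X_pow_eq_monomial, X_pow_eq_monomial, monomial_mul, monomial_mul, e3]; simp
  rw [this, coeff_monomial]
  refine if_congr ⟨fun h => ?_, ?_⟩ rfl rfl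
  · have h0 := DFunLike.congr_fun h 0
    have h1 := DFunLike.congr_fun h 1
    have h2 := DFunLike.congr_fun h 2
    simp [e3] at h0 h1 h2
    exact ⟨h0, h1, h2⟩
  · rintro ⟨rfl, rfl, rfl⟩; rfl

lemma spe_X (p : ℕ × ℕ) : spe (X p) =
    if p = (1, 0) then X 0 else if p = (0, 1) then 1 else if p = (3, 0) then X 1 else if p = (5, 0) then X 2 else 0 :=
  aeval_X _ _

lemma spe_cv : spe cv = X 1 := by simp [cv, spe_X]
lemma spe_px : spe px = X 0 * X 2 - 3 * X 1 ^ 2 := by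
  simp [px, fv, cx, cv, spe_X, map_ofNat spe 3]; ring
lemma spe_py : spe py = X 2 := by simp [py, fv, cy, cv, spe_X]
lemma spe_a : spe (z 1 0) = X 0 := by simp [spe_X]
lemma spe_b : spe (z 0 1) = 1 := by simp [spe_X]

lemma spe_ph0 (n i a : ℕ) : spe (ph0 n i a) = m3 a i 0 := by
  simp [ph0, spe_cv, spe_a, spe_b, m3]

lemma spe_ph1 (n i a : ℕ) : spe (ph1 n i a) = m3 a i 1 - if a = 0 then 0 else C 3 * m3 (a - 1) (i + 2) 0 := by
  unfold ph1
  split_ifs with h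
  · subst h; simp [spe_cv, spe_py, spe_b, m3]
  · obtain ⟨b, rfl⟩ := Nat.exists_eq_succ_of_ne_zero h
    have h3 : (C 3 : MvPolynomial (Fin 3) ℂ) = 3 := map_ofNat C 3
    simp [spe_cv, spe_px, spe_a, spe_b, m3, h3]
    ring

end DC

namespace DC

/-- number of members of the family -/
def bd (k u : ℕ) : ℕ := if u = 0 then 2 * k + 2 else 2 * (k - u)

/-- the index set -/
abbrev JJI (k : ℕ) := Σ u : Fin (k + 1), Fin (bd k u)

lemma card_JJI (k : ℕ) : Fintype.card (JJI k) + k = 2 * k + 2 + k * k := by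
  rw [Fintype.card_sigma]
  simp only [Fintype.card_fin]
  rw [Fin.sum_univ_succ]
  have h1 : ∀ m, ∑ i : Fin m, 2 * (m - (i + 1)) + m = m * m := by
    intro m
    induction m with
    | zero => rfl
    | succ m ih =>
      rw [Fin.sum_univ_succ]
      have : ∑ i : Fin m, 2 * (m + 1 - ((i.succ : Fin (m + 1)) + 1 : ℕ)) = ∑ i : Fin m, 2 * (m - (i + 1)) := by
        refine Finset.sum_congr rfl fun i _ => ?_
        simp only [Fin.val_succ]
        omega
      rw [this]
      simp only [Fin.val_zero]
      have e : (m + 1) * (m + 1) = m * m + 2 * m + 1 := by ring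
      omega
  have h2 := h1 k
  simp only [bd, Fin.val_zero, Fin.val_succ, if_true, Nat.succ_ne_zero, if_false]
  omega

/-- second type index -/
def ty (u : ℕ) : Prop := Even u ∧ u ≠ 0

instance (u : ℕ) : Decidable (ty u) := by unfold ty; infer_instance

/-- exponent of the cubic invariant -/
def ix (u : ℕ) : ℕ := if ty u then (u - 2) / 2 else (u + 1) / 2

/-- The family of polynomials. -/
noncomputable def phi (k u a : ℕ) : ZZ :=
  if ty u then ph1 (2 * k + 1) (ix u) a else ph0 (2 * k + 1) (ix u) a

lemma ix_inj {u v : ℕ} (h : ty u ↔ ty v) (hi : ix u = ix v) : u = v := by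
  unfold ix at hi
  by_cases hu : ty u
  · have hv := h.1 hu
    rw [if_pos hu, if_pos hv] at hi
    obtain ⟨⟨r, hr⟩, h0⟩ := hu
    obtain ⟨⟨s, hs⟩, h1⟩ := hv
    omega
  · have hv : ¬ ty v := fun h' => hu (h.2 h')
    rw [if_neg hu, if_neg hv] at hi
    unfold ty at hu hv
    rw [Nat.even_iff] at hu hv
    omega

lemma phi_hom {k u a : ℕ} (ha : a < bd k u) : (phi k u a).IsHomogeneous (2 * k + 1) := by
  unfold phi ix
  by_cases hu : ty u
  · rw [if_pos hu, if_pos hu]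
    obtain ⟨⟨r, hr⟩, h0⟩ := hu
    rw [bd, if_neg h0] at ha
    apply ph1_hom <;> omega
  · rw [if_neg hu, if_neg hu]
    apply ph0_hom
    unfold bd at ha
    unfold ty at hu
    rw [Nat.even_iff] at hu
    split_ifs at ha <;> omega

lemma phi_KK (k u a : ℕ) : phi k u a ∈ KK := by
  unfold phi
  split_ifs
  · exact ph1_mem z10_mem z01_mem cv_mem px_mem py_mem _ _ _
  · exact ph0_mem z10_mem z01_mem cv_mem _ _ _

lemma phi_OO (k u a : ℕ) : phi k u a ∈ OO := by
  have h1 : z 1 0 ∈ OO := z_OO _ _ (by decide)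
  have h2 : z 0 1 ∈ OO := z_OO _ _ (by decide)
  unfold phi
  split_ifs
  · exact ph1_mem h1 h2 cv_OO px_OO py_OO _ _ _
  · exact ph0_mem h1 h2 cv_OO _ _ _

lemma coeff_one (k u a u' a' : ℕ) (hu : ty u) : coeff (e3 a (ix u) 1) (spe (phi k u' a')) =
    if u' = u ∧ a' = a then 1 else 0 := by
  unfold phi
  by_cases hu' : ty u'
  · rw [if_pos hu', spe_ph1, coeff_sub, coeff_m3]
    have h1 : coeff (e3 a (ix u) 1) (if a' = 0 then (0 : MvPolynomial (Fin 3) ℂ)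
        else C 3 * m3 (a' - 1) (ix u' + 2) 0) = 0 := by
      split_ifs
      · simp
      · rw [coeff_C_mul, coeff_m3]; simp
    rw [h1, sub_zero]
    refine if_congr ⟨?_, ?_⟩ rfl rfl
    · rintro ⟨rfl, h, -⟩
      exact ⟨ix_inj (iff_of_true hu' hu) h, rfl⟩
    · rintro ⟨rfl, rfl⟩; exact ⟨rfl, rfl, rfl⟩
  · rw [if_neg hu', spe_ph0, coeff_m3, if_neg (by simp), if_neg]
    rintro ⟨rfl, -⟩
    exact hu' hu

lemma coeff_zero_one (k u a u' a' : ℕ) (hu : ¬ ty u) (hu' : ¬ ty u') :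
    coeff (e3 a (ix u) 0) (spe (phi k u' a')) = if u' = u ∧ a' = a then 1 else 0 := by
  unfold phi
  rw [if_neg hu', spe_ph0, coeff_m3]
  refine if_congr ⟨?_, ?_⟩ rfl rfl
  · rintro ⟨rfl, h, -⟩
    exact ⟨ix_inj (iff_of_false hu' hu) h, rfl⟩
  · rintro ⟨rfl, rfl⟩; exact ⟨rfl, rfl, rfl⟩

lemma idx_ext {k : ℕ} {j j' : JJI k} (h : (j'.1 : ℕ) = j.1 ∧ (j'.2 : ℕ) = j.2) : j' = j := by
  obtain ⟨u, a⟩ := j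
  obtain ⟨u', a'⟩ := j'
  obtain ⟨h1, h2⟩ := h
  have h3 : u' = u := Fin.ext h1
  subst h3
  have h4 : a' = a := Fin.ext h2
  subst h4
  rfl

lemma indep (k : ℕ) (c : JJI k → ℂ) (h : ∑ j, c j • phi k j.1 j.2 = 0) : c = 0 := by
  classical
  have h' := congrArg spe h
  rw [map_sum, map_zero] at h'
  simp only [map_smul] at h'
  have key : ∀ μ, ∑ j, c j * coeff μ (spe (phi k j.1 j.2)) = 0 := by
    intro μ
    have := congrArg (coeff μ) h'
    rw [coeff_sum, coeff_zero] at this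
    simpa only [coeff_smul, smul_eq_mul] using this
  have h1 : ∀ j : JJI k, ty j.1 → c j = 0 := by
    intro j hj
    have := key (e3 j.2 (ix j.1) 1)
    simp only [coeff_one k j.1 j.2 _ _ hj] at this
    rw [Finset.sum_eq_single j] at this
    · simpa using this
    · intro j' _ hne
      rw [if_neg (fun h => hne (idx_ext h)), mul_zero]
    · simp
  funext j
  by_cases hj : ty j.1
  · exact h1 j hj
  · have := key (e3 j.2 (ix j.1) 0)
    rw [Finset.sum_eq_single j] at this
    · rw [coeff_zero_one k _ _ _ _ hj hj] at this
      simpa using this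
    · intro j' _ hne
      by_cases hj' : ty j'.1
      · rw [h1 j' hj', zero_mul]
      · rw [coeff_zero_one k _ _ _ _ hj hj', if_neg (fun h => hne (idx_ext h)), mul_zero]
    · simp

lemma lam_sum {n : ℕ} {J : Type*} [Fintype J] (c : J → ℂ) (φ : J → ZZ) (f : RR n) :
    lam n (∑ j, c j • φ j) f = ∑ j, c j * lam n (φ j) f := by
  rw [f.as_sum, map_sum]
  simp only [map_sum, Finset.mul_sum]
  rw [Finset.sum_comm]
  refine Finset.sum_congr rfl fun s _ => ?_
  rw [mon_smul]
  simp only [map_smul, lam_mon, val, coeff_sum, coeff_smul, smul_eq_mul, Finset.mul_sum]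
  refine Finset.sum_congr rfl fun j _ => ?_
  ring

/-- all functionals together -/
noncomputable def Lam (k : ℕ) : RR (2 * k + 1) →ₗ[ℂ] (JJI k → ℂ) :=
  LinearMap.pi fun j => lam (2 * k + 1) (phi k j.1 j.2)

lemma Lam_surj (k : ℕ) : Function.Surjective (Lam k) := by
  classical
  rw [← LinearMap.range_eq_top]
  by_contra hne
  obtain ⟨g, hg0, hg⟩ := Submodule.exists_le_ker_of_lt_top _ (lt_top_iff_ne_top.2 hne)
  apply hg0
  have h1 : ∀ v, g v = ∑ j, g (Pi.single j 1) * v j := by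
    intro v
    conv_lhs => rw [← Finset.univ_sum_single v]
    rw [map_sum]
    refine Finset.sum_congr rfl fun j _ => ?_
    have : (Pi.single j (v j) : JJI k → ℂ) = v j • Pi.single j 1 := by
      rw [← Pi.single_smul]; simp
    rw [this, map_smul, smul_eq_mul, mul_comm]
  have h2 : (fun j => g (Pi.single j 1)) = 0 := by
    apply indep k
    apply eq_zero_of_lam (n := 2 * k + 1)
    · exact IsHomogeneous.sum _ _ _ fun j _ => by
        rw [MvPolynomial.smul_eq_C_mul]
        exact hmul (isHomogeneous_C _ _) (phi_hom j.2.2) (zero_add _)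
    · refine LinearMap.ext fun f => ?_
      rw [lam_sum]
      have h3 : g (Lam k f) = 0 := hg ⟨f, rfl⟩
      rw [h1] at h3
      exact h3
  refine LinearMap.ext fun v => ?_
  rw [h1]
  simp only [congrFun h2, Pi.zero_apply, zero_mul, Finset.sum_const_zero, LinearMap.zero_apply]

lemma final (k : ℕ) : (2 * (2 * k + 1) + 1) ^ (2 * k + 1) + k * k ≤
    Module.finrank ℂ (RR (2 * k + 1) ⧸ diagIdeal (2 * k + 1)) + k := by
  have h := combine (Lam k) (Lam_surj k)
    (fun f hf => funext fun j => lam_kill (phi_KK k j.1 j.2) f hf)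
    (fun f => funext fun j => lam_ee (oo_coeff (phi_OO k j.1 j.2)) f)
  have h2 := card_JJI k
  omega

end DC

theorem dim_diag_coinv_ge_of_odd (n : ℕ) (hn : 0 < n) (hodd : Odd n) :
    ((2 * n + 1 : ℤ)) ^ n + ((n : ℤ) - 1) * ((n : ℤ) - 3) / 4 ≤
      (Module.finrank ℂ (MvPolynomial (Fin n ⊕ Fin n) ℂ ⧸ diagIdeal n) : ℤ) := by
  obtain ⟨k, rfl⟩ := hodd
  have h := DC.final k
  have h1 : (((2 * k + 1 : ℕ) : ℤ) - 1) * (((2 * k + 1 : ℕ) : ℤ) - 3) / 4 = (k : ℤ) * k - k := by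
    have : (((2 * k + 1 : ℕ) : ℤ) - 1) * (((2 * k + 1 : ℕ) : ℤ) - 3) = 4 * ((k : ℤ) * k - k) := by
      push_cast; ring
    rw [this, Int.mul_ediv_cancel_left _ (by norm_num)]
  rw [h1]
  have h2 : ((((2 * (2 * k + 1) + 1) ^ (2 * k + 1) + k * k : ℕ)) : ℤ) ≤
    ((Module.finrank ℂ (DC.RR (2 * k + 1) ⧸ diagIdeal (2 * k + 1)) + k : ℕ) : ℤ) := by exact_mod_cast h
  push_cast at h2 ⊢
  linarith
end

section
/- For n = 4, the complex dimension of the diagonal coinvariant ring R_W of the Weyl group W(B_4) satisfies dim_ℂ R_W ≥ 9^4 + 1. -/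
open MvPolynomial

abbrev R4 := MvPolynomial (Fin 4 ⊕ Fin 4) ℂ
abbrev E4 := (Fin 4 ⊕ Fin 4) →₀ ℕ

/-- raising coefficient -/
def ca (j : ℤ) : ℤ := if j % 2 = 0 then 1 else j - 9
/-- lowering coefficient -/
def cb (j : ℤ) : ℤ := if j % 2 = 0 then 1 else j + 1

/-- one-variable coefficient of `X^α Y^β` -/
def A1 (α β : ℕ) (k : ℤ) : ℤ :=
  (∏ t ∈ Finset.range α, ca (k - t)) * ∏ t ∈ Finset.range β, cb (k - α + t)

/-- commutator coefficients -/
def kap : ℕ → ℕ → ℤ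
  | 0, _ => 0
  | α + 1, β => kap α β + (if (α + 1 + β) % 2 = 0 then -8 else 10)

lemma A1_succ_left (α β : ℕ) (k : ℤ) : A1 (α + 1) β k = ca k * A1 α β (k - 1) := by
  unfold A1
  rw [Finset.prod_range_succ']
  have h1 : ∀ t : ℕ, k - ((t + 1 : ℕ) : ℤ) = k - 1 - t := by intro t; push_cast; ring
  simp only [h1]
  simp
  ring

lemma A1_zero_succ (β : ℕ) (k : ℤ) : A1 0 (β + 1) k = cb k * A1 0 β (k + 1) := by
  unfold A1
  rw [Finset.prod_range_succ']
  have h1 : ∀ t : ℕ, k - ((0 : ℕ) : ℤ) + ((t + 1 : ℕ) : ℤ) = k + 1 - ((0 : ℕ) : ℤ) + t := by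
    intro t; push_cast; ring
  simp only [h1]
  simp
  ring

lemma comm_coeff (k : ℤ) :
    cb k * ca (k + 1) = ca k * cb (k - 1) + (if k % 2 = 0 then -8 else 10) := by
  unfold ca cb
  rcases Int.emod_two_eq_zero_or_one k with h | h
  · have h1 : (k + 1) % 2 = 1 := by omega
    have h2 : (k - 1) % 2 = 1 := by omega
    simp [h, h1, h2]; ring
  · have h1 : (k + 1) % 2 = 0 := by omega
    have h2 : (k - 1) % 2 = 0 := by omega
    simp [h, h1, h2]; ring

lemma A1_lower (α β : ℕ) : ∀ (k : ℤ), (k - α + β) % 2 = 0 →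
    cb k * A1 α β (k + 1) = A1 α (β + 1) k + kap α β * A1 (α - 1) β k := by
  induction α with
  | zero => intro k _; simp [A1_zero_succ, kap]
  | succ α ih =>
    intro k hk
    have h1 := ih (k - 1) (by push_cast at hk; rw [← hk]; congr 1; ring)
    rw [A1_succ_left, A1_succ_left, add_sub_cancel_right, ← mul_assoc, comm_coeff]
    rw [sub_add_cancel] at h1
    have h3 : (if k % 2 = 0 then (-8 : ℤ) else 10) = if (α + 1 + β) % 2 = 0 then -8 else 10 := by
      have : k % 2 = 0 ↔ (α + 1 + β) % 2 = 0 := by omega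
      simp [this]
    have h4 : ca k * (kap α β * A1 (α - 1) β (k - 1)) = kap α β * A1 α β k := by
      cases α with
      | zero => simp [kap]
      | succ a => rw [A1_succ_left]; simp; ring
    rw [h3, Nat.add_sub_cancel]
    simp only [kap]
    linear_combination ca k * h1 + h4

lemma A1_box (α β : ℕ) (k : ℤ) (h0 : 0 ≤ k - α + β) (h8 : k - α + β ≤ 8) (h : A1 α β k ≠ 0) :
    0 ≤ k ∧ k ≤ 8 := by
  unfold A1 at h
  have ha := left_ne_zero_of_mul h
  have hb := right_ne_zero_of_mul h
  rw [Finset.prod_ne_zero_iff] at ha hb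
  have h1 : 0 ≤ k - α := by
    by_contra hc
    push Not at hc
    apply hb (-1 - (k - α)).toNat
    · rw [Finset.mem_range]; omega
    · have : k - α + ((-1 - (k - α)).toNat : ℤ) = -1 := by omega
      rw [this]; decide
  refine ⟨by omega, ?_⟩
  by_contra hc
  push Not at hc
  apply ha (k - 9).toNat
  · rw [Finset.mem_range]; omega
  · have : k - ((k - 9).toNat : ℤ) = 9 := by omega
    rw [this]; decide

/-- the generating vector -/
def vv (k : Fin 4 → ℤ) : ℤ :=
  if ∀ i, k i = 1 ∨ k i = 3 ∨ k i = 5 ∨ k i = 7 then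
    (k 1 - k 0) * (k 2 - k 0) * (k 3 - k 0) * (k 2 - k 1) * (k 3 - k 1) * (k 3 - k 2)
  else 0

lemma vv_ne {k : Fin 4 → ℤ} (h : vv k ≠ 0) (i : Fin 4) :
    k i = 1 ∨ k i = 3 ∨ k i = 5 ∨ k i = 7 := by
  unfold vv at h
  split_ifs at h with h1
  · exact h1 i
  · exact absurd rfl h

lemma vand (k : Fin 4 → ℤ) : (Matrix.vandermonde k).det =
    (k 1 - k 0) * (k 2 - k 0) * (k 3 - k 0) * (k 2 - k 1) * (k 3 - k 1) * (k 3 - k 2) := by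
  rw [Matrix.det_vandermonde, Fin.prod_univ_four]
  have h0 : Finset.Ioi (0 : Fin 4) = {1, 2, 3} := by decide
  have h1 : Finset.Ioi (1 : Fin 4) = {2, 3} := by decide
  have h2 : Finset.Ioi (2 : Fin 4) = {3} := by decide
  have h3 : Finset.Ioi (3 : Fin 4) = ∅ := by decide
  rw [h0, h1, h2, h3]
  rw [Finset.prod_insert (by decide), Finset.prod_insert (by decide), Finset.prod_insert (by decide)]
  simp only [Finset.prod_singleton, Finset.prod_empty]
  ring

lemma vv_perm (k : Fin 4 → ℤ) (σ : Equiv.Perm (Fin 4)) :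
    vv (k ∘ σ) = (Equiv.Perm.sign σ : ℤ) * vv k := by
  unfold vv
  rw [← vand, ← vand]
  have h1 : (∀ i, (k ∘ σ) i = 1 ∨ (k ∘ σ) i = 3 ∨ (k ∘ σ) i = 5 ∨ (k ∘ σ) i = 7) ↔
      (∀ i, k i = 1 ∨ k i = 3 ∨ k i = 5 ∨ k i = 7) :=
    σ.forall_congr_left.symm.symm.trans (by simp)
  have h2 : Matrix.vandermonde (k ∘ σ) = (Matrix.vandermonde k).submatrix σ id := by
    ext i j; simp [Matrix.vandermonde]
  rw [h2, Matrix.det_permute]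
  simp only [h1]
  split_ifs <;> simp

/-- value of `X^α Y^β v` at `k` -/
def phi (s : E4) (k : Fin 4 → ℤ) : ℤ :=
  (∏ i, A1 (s (Sum.inl i)) (s (Sum.inr i)) (k i)) *
    vv (fun i => k i - s (Sum.inl i) + s (Sum.inr i))

lemma phi_box {s : E4} {k : Fin 4 → ℤ} (h : phi s k ≠ 0) (i : Fin 4) : 0 ≤ k i ∧ k i ≤ 8 := by
  unfold phi at h
  have ha := left_ne_zero_of_mul h
  have hv := vv_ne (right_ne_zero_of_mul h) i
  rw [Finset.prod_ne_zero_iff] at ha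
  exact A1_box _ _ _ (by omega) (by omega) (ha i (Finset.mem_univ _))

lemma phi_parity {s : E4} {k : Fin 4 → ℤ} (h : phi s k ≠ 0) (i : Fin 4) :
    (k i - s (Sum.inl i) + s (Sum.inr i)) % 2 = 1 := by
  have hv := vv_ne (right_ne_zero_of_mul h) i
  omega

lemma phi_split (s : E4) (k : Fin 4 → ℤ) (i : Fin 4) :
    phi s k = A1 (s (Sum.inl i)) (s (Sum.inr i)) (k i) *
      (∏ j ∈ Finset.univ.erase i, A1 (s (Sum.inl j)) (s (Sum.inr j)) (k j)) *
      vv (fun i => k i - s (Sum.inl i) + s (Sum.inr i)) := by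
  unfold phi
  rw [← Finset.mul_prod_erase _ _ (Finset.mem_univ i)]

/-- comparison of two values that agree away from `i` -/
lemma phi_split_congr (s s' : E4) (k k' : Fin 4 → ℤ) (i : Fin 4)
    (h1 : ∀ j, j ≠ i → s (Sum.inl j) = s' (Sum.inl j))
    (h2 : ∀ j, j ≠ i → s (Sum.inr j) = s' (Sum.inr j))
    (h3 : ∀ j, j ≠ i → k j = k' j)
    (h4 : k i - s (Sum.inl i) + s (Sum.inr i) = k' i - s' (Sum.inl i) + s' (Sum.inr i)) :
    phi s k = A1 (s (Sum.inl i)) (s (Sum.inr i)) (k i) *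
      (∏ j ∈ Finset.univ.erase i, A1 (s' (Sum.inl j)) (s' (Sum.inr j)) (k' j)) *
      vv (fun i => k' i - s' (Sum.inl i) + s' (Sum.inr i)) := by
  rw [phi_split s k i]
  congr 1
  · congr 1
    apply Finset.prod_congr rfl
    intro j hj
    have hj := Finset.ne_of_mem_erase hj
    rw [h1 j hj, h2 j hj, h3 j hj]
  · congr 1
    funext j
    by_cases hj : j = i
    · subst hj; exact h4
    · rw [h1 j hj, h2 j hj, h3 j hj]

lemma phi_inl (s : E4) (k : Fin 4 → ℤ) (i : Fin 4) :
    phi (s + Finsupp.single (Sum.inl i) 1) k = ca (k i) * phi s (k - Pi.single i 1) := by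
  rw [phi_split s (k - Pi.single i 1) i,
    phi_split_congr (s + Finsupp.single (Sum.inl i) 1) s k (k - Pi.single i 1) i]
  · simp [A1_succ_left]; ring
  · intro j hj; simp [hj.symm]
  · intro j hj; simp
  · intro j hj; simp [hj]
  · simp; ring

lemma phi_inr (s : E4) (k : Fin 4 → ℤ) (i : Fin 4) :
    cb (k i) * phi s (k + Pi.single i 1) = phi (s + Finsupp.single (Sum.inr i) 1) k +
      kap (s (Sum.inl i)) (s (Sum.inr i)) * phi (s - Finsupp.single (Sum.inl i) 1) k := by
  by_cases hv : vv (fun j => (k + Pi.single i 1 : Fin 4 → ℤ) j - s (Sum.inl j) + s (Sum.inr j)) = 0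
  · have e1 : phi s (k + Pi.single i 1) = 0 := by rw [phi, hv, mul_zero]
    have e2 : phi (s + Finsupp.single (Sum.inr i) 1) k = 0 := by
      rw [phi_split_congr _ s k (k + Pi.single i 1) i, hv, mul_zero]
      · intro j hj; simp
      · intro j hj; simp [hj.symm]
      · intro j hj; simp [hj]
      · simp; ring
    rw [e1, e2]
    cases hs : s (Sum.inl i) with
    | zero => simp [kap]
    | succ a =>
      have e3 : phi (s - Finsupp.single (Sum.inl i) 1) k = 0 := by
        rw [phi_split_congr _ s k (k + Pi.single i 1) i, hv, mul_zero]
        · intro j hj; simp [hj.symm]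
        · intro j hj; simp
        · intro j hj; simp [hj]
        · simp [hs]
      rw [e3]; simp
  · have hp := vv_ne hv i
    simp only [Pi.add_apply, Pi.single_eq_same] at hp
    have key := A1_lower (s (Sum.inl i)) (s (Sum.inr i)) (k i) (by omega)
    have e2 := phi_split_congr (s + Finsupp.single (Sum.inr i) 1) s k (k + Pi.single i 1) i
      (by intro j hj; simp) (by intro j hj; simp [hj.symm]) (by intro j hj; simp [hj])
      (by simp; ring)
    rw [phi_split s (k + Pi.single i 1) i, e2]
    simp only [Finsupp.add_apply, Finsupp.single_eq_same, Pi.add_apply, Pi.single_eq_same]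
    rw [← mul_assoc, ← mul_assoc, key]
    cases hs : s (Sum.inl i) with
    | zero => simp [kap]
    | succ a =>
      have e3 := phi_split_congr (s - Finsupp.single (Sum.inl i) 1) s k (k + Pi.single i 1) i
        (by intro j hj; simp [hj.symm]) (by intro j hj; simp) (by intro j hj; simp [hj])
        (by simp [hs])
      rw [e3]
      simp [hs]
      ring

abbrev LL := (Fin 4 → ℤ) → ℂ

noncomputable def phiC (s : E4) : LL := fun k => (phi s k : ℂ)

noncomputable def Phi : R4 →ₗ[ℂ] LL := (basisMonomials (Fin 4 ⊕ Fin 4) ℂ).constr ℂ phiC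

lemma Phi_monomial (s : E4) (c : ℂ) : Phi (monomial s c) = c • phiC s := by
  have h : Phi (monomial s 1) = phiC s := by
    have := (basisMonomials (Fin 4 ⊕ Fin 4) ℂ).constr_basis ℂ phiC s
    simpa [Phi] using this
  have h2 : (monomial s c : R4) = c • monomial s 1 := by simp [smul_monomial]
  rw [h2, map_smul, h]

def Xop (i : Fin 4) : LL →ₗ[ℂ] LL where
  toFun f := fun k => (ca (k i) : ℂ) * f (k - Pi.single i 1)
  map_add' f g := by funext k; simp; ring
  map_smul' c f := by funext k; simp; ring

def Yop (i : Fin 4) : LL →ₗ[ℂ] LL where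
  toFun f := fun k => (cb (k i) : ℂ) * f (k + Pi.single i 1)
  map_add' f g := by funext k; simp; ring
  map_smul' c f := by funext k; simp; ring

lemma Xop_phiC (i : Fin 4) (s : E4) :
    Xop i (phiC s) = phiC (s + Finsupp.single (Sum.inl i) 1) := by
  funext k
  have := phi_inl s k i
  simp only [phiC, Xop, LinearMap.coe_mk, AddHom.coe_mk, this]
  push_cast; ring

lemma Yop_phiC (i : Fin 4) (s : E4) :
    Yop i (phiC s) = phiC (s + Finsupp.single (Sum.inr i) 1) +
      (kap (s (Sum.inl i)) (s (Sum.inr i)) : ℂ) • phiC (s - Finsupp.single (Sum.inl i) 1) := by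
  funext k
  have := congrArg (Int.cast : ℤ → ℂ) (phi_inr s k i)
  push_cast at this
  simpa only [phiC, Yop, LinearMap.coe_mk, AddHom.coe_mk, Pi.add_apply, Pi.smul_apply,
    smul_eq_mul] using this

def GG (d : ℕ) : Submodule ℂ LL := Submodule.span ℂ (phiC '' {s | s.degree < d})

lemma GG_mono {d e : ℕ} (h : d ≤ e) : GG d ≤ GG e :=
  Submodule.span_mono (Set.image_mono fun s (hs : s.degree < d) => lt_of_lt_of_le hs h)

lemma phiC_mem {s : E4} {d : ℕ} (h : s.degree < d) : phiC s ∈ GG d :=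
  Submodule.subset_span ⟨s, h, rfl⟩

/-- the remainder term in `Yop_phiC` -/
lemma rem_mem (s : E4) (i : Fin 4) {d : ℕ} (h : s.degree ≤ d) :
    (kap (s (Sum.inl i)) (s (Sum.inr i)) : ℂ) • phiC (s - Finsupp.single (Sum.inl i) 1) ∈ GG d := by
  cases hs : s (Sum.inl i) with
  | zero => simp [kap]
  | succ a =>
    apply Submodule.smul_mem
    apply phiC_mem
    have h1 : s = (s - Finsupp.single (Sum.inl i) 1) + Finsupp.single (Sum.inl i) 1 := by
      ext j
      by_cases hj : j = Sum.inl i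
      · subst hj; simp [hs]
      · have : ¬ Sum.inl i = j := fun h => hj h.symm
        simp [this]
    have h2 := congrArg Finsupp.degree h1
    rw [map_add, Finsupp.degree_single] at h2
    omega

lemma Xop_GG (i : Fin 4) {d : ℕ} {f : LL} (hf : f ∈ GG d) : Xop i f ∈ GG (d + 1) := by
  induction hf using Submodule.span_induction with
  | mem x hx =>
    obtain ⟨s, hs, rfl⟩ := hx
    rw [Xop_phiC]
    apply phiC_mem
    have hs : s.degree < d := hs
    rw [map_add, Finsupp.degree_single]; omega
  | zero => simp
  | add x y _ _ hx hy => rw [map_add]; exact add_mem hx hy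
  | smul c x _ hx => rw [map_smul]; exact Submodule.smul_mem _ _ hx

lemma Yop_GG (i : Fin 4) {d : ℕ} {f : LL} (hf : f ∈ GG d) : Yop i f ∈ GG (d + 1) := by
  induction hf using Submodule.span_induction with
  | mem x hx =>
    obtain ⟨s, hs, rfl⟩ := hx
    have hs : s.degree < d := hs
    rw [Yop_phiC]
    refine add_mem (phiC_mem ?_) (rem_mem s i (by omega))
    rw [map_add, Finsupp.degree_single]; omega
  | zero => simp
  | add x y _ _ hx hy => rw [map_add]; exact add_mem hx hy
  | smul c x _ hx => rw [map_smul]; exact Submodule.smul_mem _ _ hx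

lemma Phi_mul_inl (f : R4) (i : Fin 4) : Phi (f * X (Sum.inl i)) = Xop i (Phi f) := by
  induction f using MvPolynomial.induction_on' with
  | monomial s c =>
    rw [X, monomial_mul, Phi_monomial, Phi_monomial, map_smul, Xop_phiC, mul_one]
  | add p q hp hq => rw [add_mul, map_add, map_add, map_add, hp, hq]

lemma Phi_mul_inr {f : R4} {d : ℕ} (hf : f.IsHomogeneous d) (i : Fin 4) :
    Phi (f * X (Sum.inr i)) - Yop i (Phi f) ∈ GG d := by
  have h : f = ∑ s ∈ f.support, monomial s (coeff s f) := f.as_sum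
  rw [h, Finset.sum_mul, map_sum, map_sum, map_sum, ← Finset.sum_sub_distrib]
  apply Submodule.sum_mem
  intro s hs
  rw [X, monomial_mul, Phi_monomial, Phi_monomial, map_smul, Yop_phiC, mul_one, smul_add,
    sub_add_cancel_left]
  apply Submodule.neg_mem
  apply Submodule.smul_mem
  apply rem_mem
  have := hf (mem_support_iff.1 hs)
  rw [Finsupp.degree_eq_weight_one]
  exact this.le

lemma hc_mul_X (f : R4) (j : Fin 4 ⊕ Fin 4) (d : ℕ) :
    homogeneousComponent (d + 1) (f * X j) = homogeneousComponent d f * X j := by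
  induction f using MvPolynomial.induction_on' with
  | monomial s c =>
    ext t
    rw [X, monomial_mul, coeff_homogeneousComponent, coeff_mul_monomial', coeff_homogeneousComponent]
    simp only [coeff_monomial, mul_one]
    by_cases h : s + Finsupp.single j 1 = t
    · subst h
      simp
    · have : Finsupp.single j 1 ≤ t → ¬ s = t - Finsupp.single j 1 := by
        rintro h1 rfl
        exact h (tsub_add_cancel_of_le h1)
      simp only [h, if_false, ite_self]
      by_cases h1 : Finsupp.single j 1 ≤ t
      · simp [this h1]
      · simp [h1]
  | add p q hp hq => rw [add_mul, map_add, map_add, hp, hq, add_mul]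

lemma hc_zero_mul_X (f : R4) (j : Fin 4 ⊕ Fin 4) :
    homogeneousComponent 0 (f * X j) = 0 := by
  rw [homogeneousComponent_zero, ← constantCoeff_eq]; simp

/-- the ideal of leading forms of annihilators -/
def JJ : Ideal R4 where
  carrier := {f | ∀ d, Phi (homogeneousComponent d f) ∈ GG d}
  zero_mem' := by intro d; simp
  add_mem' := by
    intro a b ha hb d
    rw [map_add, map_add]; exact add_mem (ha d) (hb d)
  smul_mem' := by
    intro c f hf
    rw [smul_eq_mul]
    induction c using MvPolynomial.induction_on with
    | C a =>
      intro d
      rw [homogeneousComponent_C_mul, ← smul_eq_C_mul, map_smul]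
      exact Submodule.smul_mem _ _ (hf d)
    | add p q hp hq =>
      intro d
      rw [add_mul, map_add, map_add]; exact add_mem (hp d) (hq d)
    | mul_X p j hp =>
      rw [mul_right_comm]
      intro d
      cases d with
      | zero => rw [hc_zero_mul_X]; simp
      | succ d =>
        rw [hc_mul_X]
        rcases j with i | i
        · rw [Phi_mul_inl]; exact Xop_GG i (hp d)
        · have h1 := Phi_mul_inr (homogeneousComponent_isHomogeneous d (p * f)) i
          have h2 := Yop_GG i (hp d)
          have := add_mem (GG_mono (Nat.le_succ d) h1) h2
          simpa using this

lemma mem_JJ {f : R4} : f ∈ JJ ↔ ∀ d, Phi (homogeneousComponent d f) ∈ GG d := Iff.rfl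

lemma bAct_sign_monomial (ε : Fin 4 → ℤˣ) (t : E4) (c : ℂ) :
    bAct 4 ε 1 (monomial t c) =
      monomial t ((∏ i, (((ε i : ℤ) : ℂ)) ^ (t (Sum.inl i) + t (Sum.inr i))) * c) := by
  rw [bAct, aeval_monomial, monomial_eq, Finsupp.prod_fintype _ _ (by simp),
    Finsupp.prod_fintype _ _ (by simp), Fintype.prod_sum_type, Fintype.prod_sum_type]
  simp only [Sum.elim_inl, Sum.elim_inr, mul_pow, Equiv.Perm.coe_one, id_eq, smul_eq_C_mul,
    Finset.prod_mul_distrib, algebraMap_eq, pow_add, C_mul, map_prod, C_pow]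
  ring

lemma coeff_bAct_sign (ε : Fin 4 → ℤˣ) (f : R4) (s : E4) :
    coeff s (bAct 4 ε 1 f) =
      (∏ i, (((ε i : ℤ) : ℂ)) ^ (s (Sum.inl i) + s (Sum.inr i))) * coeff s f := by
  induction f using MvPolynomial.induction_on' with
  | monomial t c =>
    rw [bAct_sign_monomial, coeff_monomial, coeff_monomial]
    split_ifs with h
    · rw [h]
    · simp
  | add p q hp hq => rw [map_add, coeff_add, coeff_add, hp, hq]; ring

lemma inv_even {p : R4} (hp : ∀ ε σ, bAct 4 ε σ p = p) {s : E4} (hs : coeff s p ≠ 0) (i : Fin 4) :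
    (s (Sum.inl i) + s (Sum.inr i)) % 2 = 0 := by
  have h := coeff_bAct_sign (Function.update 1 i (-1)) p s
  rw [hp, Finset.prod_eq_single i] at h
  · simp only [Function.update_self, Units.val_neg, Units.val_one, Int.cast_neg, Int.cast_one] at h
    rcases Nat.even_or_odd (s (Sum.inl i) + s (Sum.inr i)) with h1 | h1
    · exact Nat.even_iff.1 h1
    · rw [h1.neg_one_pow] at h
      exfalso; apply hs
      linear_combination h / 2
  · intro j _ hj
    simp [Function.update_of_ne hj]
  · simp

lemma bAct_perm (σ : Equiv.Perm (Fin 4)) (f : R4) :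
    bAct 4 1 σ f = rename (Sum.map σ σ) f := by
  have : bAct 4 1 σ = rename (Sum.map σ σ) := by
    apply MvPolynomial.algHom_ext
    rintro (i | i) <;> simp [bAct]
  rw [this]

lemma inj_map (σ : Equiv.Perm (Fin 4)) : Function.Injective (Sum.map σ σ) :=
  Sum.map_injective.2 ⟨σ.injective, σ.injective⟩

lemma phi_perm (σ : Equiv.Perm (Fin 4)) (s : E4) (k : Fin 4 → ℤ) :
    phi s (k ∘ σ) = (Equiv.Perm.sign σ : ℤ) * phi (s.mapDomain (Sum.map σ σ)) k := by
  have hl : ∀ i, s.mapDomain (Sum.map σ σ) (Sum.inl (σ i)) = s (Sum.inl i) := fun i =>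
    Finsupp.mapDomain_apply (inj_map σ) s (Sum.inl i)
  have hr : ∀ i, s.mapDomain (Sum.map σ σ) (Sum.inr (σ i)) = s (Sum.inr i) := fun i =>
    Finsupp.mapDomain_apply (inj_map σ) s (Sum.inr i)
  unfold phi
  have h1 := vv_perm (fun i => k i - s.mapDomain (Sum.map σ σ) (Sum.inl i)
    + s.mapDomain (Sum.map σ σ) (Sum.inr i)) σ
  have h2 : (fun i => k i - (s.mapDomain (Sum.map σ σ) (Sum.inl i) : ℤ)
    + s.mapDomain (Sum.map σ σ) (Sum.inr i)) ∘ σ =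
      fun i => (k ∘ σ) i - (s (Sum.inl i) : ℤ) + s (Sum.inr i) := by
    funext i; simp [hl, hr]
  rw [h2] at h1
  rw [h1, ← Equiv.prod_comp σ (fun i => A1 (s.mapDomain (Sum.map σ σ) (Sum.inl i))
    (s.mapDomain (Sum.map σ σ) (Sum.inr i)) (k i))]
  simp only [hl, hr, Function.comp]
  ring

lemma Phi_perm (σ : Equiv.Perm (Fin 4)) (f : R4) (k : Fin 4 → ℤ) :
    Phi f (k ∘ σ) = ((Equiv.Perm.sign σ : ℤ) : ℂ) * Phi (rename (Sum.map σ σ) f) k := by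
  induction f using MvPolynomial.induction_on' with
  | monomial t c =>
    rw [rename_monomial, Phi_monomial, Phi_monomial]
    simp only [Pi.smul_apply, phiC, phi_perm, smul_eq_mul]
    push_cast; ring
  | add p q hp hq =>
    rw [map_add, map_add, map_add, Pi.add_apply, Pi.add_apply, hp, hq]; ring

lemma Phi_apply (f : R4) (k : Fin 4 → ℤ) :
    Phi f k = ∑ s ∈ f.support, coeff s f * (phi s k : ℂ) := by
  conv_lhs => rw [f.as_sum, map_sum, Finset.sum_apply]
  apply Finset.sum_congr rfl
  intro s _
  rw [Phi_monomial]; rfl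

lemma Phi_ne {f : R4} {k : Fin 4 → ℤ} (h : Phi f k ≠ 0) :
    ∃ s, coeff s f ≠ 0 ∧ phi s k ≠ 0 := by
  rw [Phi_apply] at h
  obtain ⟨s, _, hs⟩ := Finset.exists_ne_zero_of_sum_ne_zero h
  exact ⟨s, left_ne_zero_of_mul hs, by exact_mod_cast right_ne_zero_of_mul hs⟩

lemma phi_zero (k : Fin 4 → ℤ) : phi 0 k = vv k := by
  simp [phi, A1]

lemma Phi_inv {p : R4} (hp : ∀ ε σ, bAct 4 ε σ p = p) : ∃ c : ℂ, Phi p = c • phiC 0 := by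
  have halt : ∀ (σ : Equiv.Perm (Fin 4)) k,
      Phi p (k ∘ σ) = ((Equiv.Perm.sign σ : ℤ) : ℂ) * Phi p k := by
    intro σ k
    rw [Phi_perm, ← bAct_perm, hp]
  set k0 : Fin 4 → ℤ := fun i => 2 * (i : ℤ) + 1 with hk0
  have hv0 : vv k0 = 768 := by decide
  refine ⟨Phi p k0 / 768, ?_⟩
  funext k
  simp only [Pi.smul_apply, phiC, phi_zero, smul_eq_mul]
  by_cases hk : ∀ i, k i = 1 ∨ k i = 3 ∨ k i = 5 ∨ k i = 7
  · have : ∀ i, ∃ j : Fin 4, k i = k0 j := by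
      intro i
      rcases hk i with h | h | h | h
      · exact ⟨0, by rw [h]; rfl⟩
      · exact ⟨1, by rw [h]; rfl⟩
      · exact ⟨2, by rw [h]; rfl⟩
      · exact ⟨3, by rw [h]; rfl⟩
    choose j hj using this
    by_cases hinj : Function.Injective j
    · set σ := Equiv.ofBijective j (Finite.injective_iff_bijective.1 hinj)
      have hkσ : k = k0 ∘ σ := by funext i; exact hj i
      rw [hkσ, halt, vv_perm, hv0]
      push_cast; ring
    · simp only [Function.Injective, not_forall] at hinj
      obtain ⟨a, b, hab, hne⟩ := hinj
      have hks : k ∘ (Equiv.swap a b) = k := by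
        funext i
        simp only [Function.comp]
        by_cases h1 : i = a
        · subst h1; rw [Equiv.swap_apply_left, hj, hj, hab]
        · by_cases h2 : i = b
          · subst h2; rw [Equiv.swap_apply_right, hj, hj, hab]
          · rw [Equiv.swap_apply_of_ne_of_ne h1 h2]
      have e1 := halt (Equiv.swap a b) k
      have e2 := vv_perm k (Equiv.swap a b)
      rw [hks, Equiv.Perm.sign_swap hne] at e1 e2
      have e3 : vv k = 0 := by simp at e2; omega
      have e4 : Phi p k = 0 := by
        simp at e1; linear_combination e1 / 2
      rw [e3, e4]; simp
  · have e3 : vv k = 0 := by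
      by_contra h; exact hk (vv_ne h)
    have e4 : Phi p k = 0 := by
      by_contra h
      obtain ⟨s, hs, hph⟩ := Phi_ne h
      apply hk
      intro i
      have h1 := inv_even hp hs i
      have h2 := phi_parity hph i
      have h3 := phi_box hph i
      omega
    rw [e3, e4]; simp

lemma bAct_hc (ε : Fin 4 → ℤˣ) (σ : Equiv.Perm (Fin 4)) (d : ℕ) (f : R4) :
    bAct 4 ε σ (homogeneousComponent d f) = homogeneousComponent d (bAct 4 ε σ f) := by
  have hX : ∀ (g : R4) (j : Fin 4 ⊕ Fin 4), ∃ (c : ℂ) (j' : Fin 4 ⊕ Fin 4),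
      ∀ g : R4, bAct 4 ε σ (g * X j) = c • (bAct 4 ε σ g * X j') := by
    intro g j
    rcases j with i | i
    · exact ⟨((ε i : ℤ) : ℂ), Sum.inl (σ i), fun g => by
        rw [map_mul]; simp [bAct]⟩
    · exact ⟨((ε i : ℤ) : ℂ), Sum.inr (σ i), fun g => by
        rw [map_mul]; simp [bAct]⟩
  induction f using MvPolynomial.induction_on generalizing d with
  | C a =>
    have : bAct 4 ε σ (C a) = C a := by simp [bAct]
    rw [this]
    cases d with
    | zero => rw [homogeneousComponent_zero, coeff_zero_C, this]
    | succ d => rw [homogeneousComponent_of_mem (isHomogeneous_C _ a)]; simp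
  | add p q hp hq => simp only [map_add, hp, hq]
  | mul_X p j hp =>
    obtain ⟨c, j', h⟩ := hX p j
    rw [h, map_smul]
    cases d with
    | zero => rw [hc_zero_mul_X, hc_zero_mul_X]; simp
    | succ d => rw [hc_mul_X, hc_mul_X, h, hp]

lemma diag_le_JJ : diagIdeal 4 ≤ JJ := by
  rw [diagIdeal, Ideal.span_le]
  rintro p ⟨hp, h0⟩ d
  cases d with
  | zero =>
    rw [homogeneousComponent_zero, ← constantCoeff_eq, h0]; simp
  | succ d =>
    obtain ⟨c, hc⟩ := Phi_inv (p := homogeneousComponent (d + 1) p)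
      (fun ε σ => by rw [bAct_hc, hp])
    rw [hc]
    exact Submodule.smul_mem _ _ (phiC_mem (by simp))

/-- exponent vector from its `x`- and `y`-parts -/
noncomputable def EE (u w : Fin 4 → ℕ) : E4 := Finsupp.equivFunOnFinite.symm (Sum.elim u w)

lemma EE_inl (u w : Fin 4 → ℕ) (i : Fin 4) : EE u w (Sum.inl i) = u i := rfl
lemma EE_inr (u w : Fin 4 → ℕ) (i : Fin 4) : EE u w (Sum.inr i) = w i := rfl

lemma EE_degree (u w : Fin 4 → ℕ) : (EE u w).degree = ∑ i, u i + ∑ i, w i := by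
  rw [Finsupp.degree_eq_sum, Fintype.sum_sum_type]
  simp [EE_inl, EE_inr]

def phi' (u w : Fin 4 → ℕ) (k : Fin 4 → ℤ) : ℤ :=
  (∏ i, A1 (u i) (w i) (k i)) * vv (fun i => k i - u i + w i)

lemma phi_EE (u w : Fin 4 → ℕ) (k : Fin 4 → ℤ) : phi (EE u w) k = phi' u w k := rfl

/-- `∑ xᵢ³ ∏_{j≠i} yⱼ` -/
noncomputable def gg : R4 :=
  monomial (EE ![3,0,0,0] ![0,1,1,1]) 1 + monomial (EE ![0,3,0,0] ![1,0,1,1]) 1 +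
  monomial (EE ![0,0,3,0] ![1,1,0,1]) 1 + monomial (EE ![0,0,0,3] ![1,1,1,0]) 1

noncomputable def qq : R4 :=
  monomial (EE ![1,1,0,0] ![0,0,1,1]) 1 + monomial (EE ![1,0,1,0] ![0,1,0,1]) 1 +
  monomial (EE ![1,0,0,1] ![0,1,1,0]) 1 + monomial (EE ![0,1,1,0] ![1,0,0,1]) 1 +
  monomial (EE ![0,1,0,1] ![1,0,1,0]) 1 + monomial (EE ![0,0,1,1] ![1,1,0,0]) 1

def gval (k : Fin 4 → ℤ) : ℤ :=
  phi' ![3,0,0,0] ![0,1,1,1] k + phi' ![0,3,0,0] ![1,0,1,1] k +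
  phi' ![0,0,3,0] ![1,1,0,1] k + phi' ![0,0,0,3] ![1,1,1,0] k

def qval (k : Fin 4 → ℤ) : ℤ :=
  phi' ![1,1,0,0] ![0,0,1,1] k + phi' ![1,0,1,0] ![0,1,0,1] k +
  phi' ![1,0,0,1] ![0,1,1,0] k + phi' ![0,1,1,0] ![1,0,0,1] k +
  phi' ![0,1,0,1] ![1,0,1,0] k + phi' ![0,0,1,1] ![1,1,0,0] k

set_option maxRecDepth 100000 in
lemma gval_qval_dec : ∀ a b c d : Fin 5,
    gval ![2 * (a : ℤ), 2 * (b : ℤ), 2 * (c : ℤ), 2 * (d : ℤ)] =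
    2 * qval ![2 * (a : ℤ), 2 * (b : ℤ), 2 * (c : ℤ), 2 * (d : ℤ)] := by
  decide +kernel

lemma phi'_zero {u w : Fin 4 → ℕ} (huw : ∀ i, (u i + w i) % 2 = 1) {k : Fin 4 → ℤ}
    (hk : ¬ ∀ i, 0 ≤ k i ∧ k i ≤ 8 ∧ k i % 2 = 0) : phi' u w k = 0 := by
  by_contra h
  rw [← phi_EE] at h
  apply hk
  intro i
  have h1 := phi_box h i
  have h2 := phi_parity h i
  rw [EE_inl, EE_inr] at h2
  have := huw i
  omega

lemma gval_qval (k : Fin 4 → ℤ) : gval k = 2 * qval k := by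
  by_cases hk : ∀ i, 0 ≤ k i ∧ k i ≤ 8 ∧ k i % 2 = 0
  · have : ∀ i, ∃ j : Fin 5, k i = 2 * (j : ℤ) := by
      intro i
      have := hk i
      exact ⟨⟨(k i / 2).toNat, by omega⟩, by simp; omega⟩
    choose j hj using this
    have hkj : k = ![2 * (j 0 : ℤ), 2 * (j 1 : ℤ), 2 * (j 2 : ℤ), 2 * (j 3 : ℤ)] := by
      funext i
      rw [hj]
      fin_cases i <;> rfl
    rw [hkj]
    exact gval_qval_dec _ _ _ _
  · unfold gval qval
    rw [phi'_zero (by decide) hk, phi'_zero (by decide) hk, phi'_zero (by decide) hk,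
      phi'_zero (by decide) hk, phi'_zero (by decide) hk, phi'_zero (by decide) hk,
      phi'_zero (by decide) hk, phi'_zero (by decide) hk, phi'_zero (by decide) hk,
      phi'_zero (by decide) hk]
    rfl

lemma Phi_gg : Phi gg = (2 : ℂ) • Phi qq := by
  funext k
  have h := congrArg (Int.cast : ℤ → ℂ) (gval_qval k)
  unfold gval qval at h
  simp only [gg, qq, map_add, Phi_monomial, one_smul, Pi.add_apply, Pi.smul_apply, phiC, phi_EE,
    smul_eq_mul]
  push_cast at h
  exact h

lemma gg_mem : gg ∈ JJ := by
  have hhom : gg.IsHomogeneous 6 := by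
    unfold gg
    refine IsHomogeneous.add (IsHomogeneous.add (IsHomogeneous.add ?_ ?_) ?_) ?_ <;>
    · apply isHomogeneous_monomial
      rw [EE_degree]; decide
  intro d
  by_cases hd : d = 6
  · subst hd
    rw [homogeneousComponent_eq_self hhom, Phi_gg]
    apply Submodule.smul_mem
    simp only [qq, map_add, Phi_monomial, one_smul]
    refine add_mem (add_mem (add_mem (add_mem (add_mem ?_ ?_) ?_) ?_) ?_) ?_ <;>
    · apply phiC_mem
      rw [EE_degree]; decide
  · rw [homogeneousComponent_of_mem hhom, if_neg hd, map_zero]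
    exact zero_mem _

def G3 (a : ℕ) : ℤ := if a = 0 then -6 else if a = 1 then 2 else if a = 2 then -2 else 6

/-- coefficients of the functional (apolar pairing with a harmonic polynomial) -/
def Lam (u w : Fin 4 → ℕ) : ℤ :=
  if ∑ i, u i = 3 then
    ∑ i, if u i + w i = 3 ∧ ∀ j, j ≠ i → u j + w j = 1 then G3 (u i) else 0
  else 0

lemma Lam_ne {u w : Fin 4 → ℕ} (h : Lam u w ≠ 0) :
    ∃ i, u i + w i = 3 ∧ ∀ j, j ≠ i → u j + w j = 1 := by
  unfold Lam at h
  split_ifs at h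
  · obtain ⟨i, _, hi⟩ := Finset.exists_ne_zero_of_sum_ne_zero h
    refine ⟨i, ?_⟩
    by_contra hc
    rw [if_neg hc] at hi
    exact hi rfl
  · exact absurd rfl h

noncomputable def lamC (s : E4) : ℂ := (Lam (fun i => s (Sum.inl i)) (fun i => s (Sum.inr i)) : ℂ)

noncomputable def lam : R4 →ₗ[ℂ] ℂ := (basisMonomials (Fin 4 ⊕ Fin 4) ℂ).constr ℂ lamC

lemma lam_monomial (s : E4) (c : ℂ) : lam (monomial s c) = c * lamC s := by
  have h : lam (monomial s 1) = lamC s := by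
    have := (basisMonomials (Fin 4 ⊕ Fin 4) ℂ).constr_basis ℂ lamC s
    simpa [lam] using this
  have h2 : (monomial s c : R4) = c • monomial s 1 := by simp [smul_monomial]
  rw [h2, map_smul, h, smul_eq_mul]

lemma lam_gg : lam gg ≠ 0 := by
  have h : lam gg = ((Lam ![3,0,0,0] ![0,1,1,1] + Lam ![0,3,0,0] ![1,0,1,1] +
      Lam ![0,0,3,0] ![1,1,0,1] + Lam ![0,0,0,3] ![1,1,1,0] : ℤ) : ℂ) := by
    simp only [gg, map_add, lam_monomial, one_mul, lamC, EE_inl, EE_inr]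
    push_cast; rfl
  have h2 : (Lam ![3,0,0,0] ![0,1,1,1] + Lam ![0,3,0,0] ![1,0,1,1] +
      Lam ![0,0,3,0] ![1,1,0,1] + Lam ![0,0,0,3] ![1,1,1,0] : ℤ) = 24 := by decide
  rw [h, h2]; norm_num

/-- the three quadratic exponents; `a + b = 2` -/
lemma Lam_dec : ∀ c : Fin 3, ∀ t : Fin 4 → Fin 2,
    ∑ i, Lam ((fun j => (t j : ℕ)) + Pi.single i (c : ℕ))
      ((fun j => 1 - (t j : ℕ)) + Pi.single i (2 - (c : ℕ))) = 0 := by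
  decide +kernel

lemma Lam_sum (a b : ℕ) (hab : a + b = 2) (u w : Fin 4 → ℕ) :
    ∑ i, Lam (u + Pi.single i a) (w + Pi.single i b) = 0 := by
  by_cases h : ∀ j, u j + w j = 1
  · have hu : u = fun j => (((⟨u j, by have := h j; omega⟩ : Fin 2)) : ℕ) := rfl
    have hw : w = fun j => 1 - (((⟨u j, by have := h j; omega⟩ : Fin 2)) : ℕ) := by
      funext j; have := h j; simp; omega
    have hb : b = 2 - a := by omega
    have := Lam_dec ⟨a, by omega⟩ (fun j => ⟨u j, by have := h j; omega⟩)
    rw [hw, hb]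
    exact this
  · apply Finset.sum_eq_zero
    intro i _
    by_contra hc
    obtain ⟨i', h1, h2⟩ := Lam_ne hc
    apply h
    have hii : i = i' := by
      by_contra hne
      have := h2 i hne
      simp at this
      omega
    subst hii
    intro j
    by_cases hj : j = i
    · subst hj; simp at h1; omega
    · have := h2 j hj
      simpa [hj] using this

/-- quadratic exponent -/
noncomputable def Q2 (a b : ℕ) (i : Fin 4) : E4 :=
  Finsupp.single (Sum.inl i) a + Finsupp.single (Sum.inr i) b

lemma lam_quad (m : E4) (a b : ℕ) (hab : a + b = 2) : ∑ i, lamC (m + Q2 a b i) = 0 := by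
  have h := congrArg (Int.cast : ℤ → ℂ) (Lam_sum a b hab (fun i => m (Sum.inl i)) (fun i => m (Sum.inr i)))
  rw [Int.cast_sum, Int.cast_zero] at h
  rw [← h]
  apply Finset.sum_congr rfl
  intro i _
  unfold lamC
  congr 2
  · funext j
    simp [Q2, Finsupp.single_apply, Pi.single_apply, eq_comm]
  · funext j
    simp [Q2, Finsupp.single_apply, Pi.single_apply, eq_comm]

lemma inv_quad {p : R4} (hp : ∀ ε σ, bAct 4 ε σ p = p) (a b : ℕ) (i : Fin 4) :
    coeff (Q2 a b i) p = coeff (Q2 a b 0) p := by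
  have h := coeff_rename_mapDomain (Sum.map (Equiv.swap 0 i) (Equiv.swap 0 i))
    (inj_map (Equiv.swap 0 i)) p (Q2 a b 0)
  rw [← bAct_perm, hp] at h
  rw [← h, Q2, Q2, Finsupp.mapDomain_add, Finsupp.mapDomain_single, Finsupp.mapDomain_single]
  simp

lemma sum_coeff_lam (m : E4) (p : R4) :
    lam (monomial m 1 * p) = ∑ s ∈ p.support, coeff s p * lamC (m + s) := by
  conv_lhs => rw [p.as_sum, Finset.mul_sum, map_sum]
  apply Finset.sum_congr rfl
  intro s _
  rw [monomial_mul, lam_monomial, one_mul]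

/-- the orbit sum of a quadratic monomial -/
noncomputable def PQ (a b : ℕ) : R4 := ∑ i, monomial (Q2 a b i) 1

lemma Q2_inj {a b a' b' : ℕ} {i i' : Fin 4} (hab : a + b = 2) (hab' : a' + b' = 2)
    (h : Q2 a b i = Q2 a' b' i') : i = i' ∧ a = a' := by
  have h1 := DFunLike.congr_fun h (Sum.inl i)
  have h2 := DFunLike.congr_fun h (Sum.inr i)
  by_cases hi : i = i'
  · subst hi
    simp [Q2] at h1
    exact ⟨rfl, h1⟩
  · have : ¬ i' = i := fun h => hi h.symm
    simp [Q2, hi] at h1 h2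
    omega

lemma coeff_PQ {a b a' b' : ℕ} {i : Fin 4} (hab : a + b = 2) (hab' : a' + b' = 2) :
    coeff (Q2 a b i) (PQ a' b') = if a = a' then 1 else 0 := by
  rw [PQ, coeff_sum]
  simp only [coeff_monomial]
  by_cases h : a = a'
  · have hb : b = b' := by omega
    subst h hb
    rw [if_pos rfl, Finset.sum_eq_single i]
    · simp
    · intro j _ hj
      rw [if_neg]
      intro h
      exact hj (Q2_inj hab hab h).1
    · simp
  · rw [if_neg h]
    apply Finset.sum_eq_zero
    intro j _
    rw [if_neg]
    intro h'
    exact h (Q2_inj hab' hab h').2.symm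

lemma lam_PQ (m : E4) (a b : ℕ) (hab : a + b = 2) : lam (monomial m 1 * PQ a b) = 0 := by
  rw [PQ, Finset.mul_sum, map_sum]
  simp only [monomial_mul, lam_monomial, one_mul]
  exact lam_quad m a b hab

lemma lam_inv_monomial {p : R4} (hp : ∀ ε σ, bAct 4 ε σ p = p) (h0 : constantCoeff p = 0) (m : E4) :
    lam (monomial m 1 * p) = 0 := by
  set A := coeff (Q2 2 0 0) p
  set B := coeff (Q2 1 1 0) p
  set D := coeff (Q2 0 2 0) p
  set p' : R4 := p - A • PQ 2 0 - B • PQ 1 1 - D • PQ 0 2 with hp'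
  have key : lam (monomial m 1 * p') = 0 := by
    rw [sum_coeff_lam]
    apply Finset.sum_eq_zero
    intro s hs
    by_contra hne
    have h1 := left_ne_zero_of_mul hne
    have h2 := right_ne_zero_of_mul hne
    have hq : ∀ a b i, a + b = 2 → coeff (Q2 a b i) p' = 0 := by
      intro a b i hab
      rw [hp', coeff_sub, coeff_sub, coeff_sub, coeff_smul, coeff_smul, coeff_smul,
        coeff_PQ hab rfl, coeff_PQ hab rfl, coeff_PQ hab rfl, inv_quad hp]
      have : (a = 2 ∧ b = 0) ∨ (a = 1 ∧ b = 1) ∨ (a = 0 ∧ b = 2) := by omega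
      rcases this with ⟨rfl, rfl⟩ | ⟨rfl, rfl⟩ | ⟨rfl, rfl⟩ <;> simp [A, B, D]
    have hnq : ∀ a b i, a + b = 2 → s ≠ Q2 a b i := by
      rintro a b i hab rfl
      exact h1 (hq a b i hab)
    have hPQ : ∀ a b, a + b = 2 → coeff s (PQ a b) = 0 := by
      intro a b hab
      rw [PQ, coeff_sum]
      apply Finset.sum_eq_zero
      intro i _
      rw [coeff_monomial, if_neg (hnq a b i hab).symm]
    have hsp : coeff s p ≠ 0 := by
      rw [hp', coeff_sub, coeff_sub, coeff_sub, coeff_smul, coeff_smul, coeff_smul,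
        hPQ 2 0 rfl, hPQ 1 1 rfl, hPQ 0 2 rfl] at h1
      simpa using h1
    have heven := inv_even hp hsp
    have hL : Lam (fun i => (m + s) (Sum.inl i)) (fun i => (m + s) (Sum.inr i)) ≠ 0 := by
      intro h; apply h2; unfold lamC; rw [h]; simp
    obtain ⟨i, hi1, hi2⟩ := Lam_ne hL
    have hz : ∀ j, j ≠ i → s (Sum.inl j) = 0 ∧ s (Sum.inr j) = 0 := by
      intro j hj
      have e1 := hi2 j hj
      have e2 := heven j
      simp at e1
      omega
    have hs2 : s = Q2 (s (Sum.inl i)) (s (Sum.inr i)) i := by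
      ext j
      rcases j with j | j
      · by_cases hj : j = i
        · subst hj; simp [Q2]
        · simp [Q2, hj, (hz j hj).1]
      · by_cases hj : j = i
        · subst hj; simp [Q2]
        · simp [Q2, hj, (hz j hj).2]
    have e2 := heven i
    simp at hi1
    have e3 : s (Sum.inl i) + s (Sum.inr i) = 0 ∨ s (Sum.inl i) + s (Sum.inr i) = 2 := by omega
    rcases e3 with e3 | e3
    · have : s = 0 := by
        rw [hs2]
        have f1 : s (Sum.inl i) = 0 := by omega
        have f2 : s (Sum.inr i) = 0 := by omega
        rw [f1, f2]; simp [Q2]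
      rw [this, ← constantCoeff_eq] at hsp
      exact hsp h0
    · exact hnq _ _ i e3 hs2
  have hdec : p = p' + A • PQ 2 0 + B • PQ 1 1 + D • PQ 0 2 := by rw [hp']; ring
  rw [hdec, mul_add, mul_add, mul_add, map_add, map_add, map_add, key, mul_smul_comm,
    mul_smul_comm, mul_smul_comm, map_smul, map_smul, map_smul, lam_PQ m 2 0 rfl,
    lam_PQ m 1 1 rfl, lam_PQ m 0 2 rfl]
  simp

lemma lam_diag {f : R4} (hf : f ∈ diagIdeal 4) : ∀ q : R4, lam (q * f) = 0 := by
  rw [diagIdeal, Ideal.span] at hf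
  induction hf using Submodule.span_induction with
  | mem p hp =>
    intro q
    induction q using MvPolynomial.induction_on' with
    | monomial m c =>
      have h2 : (monomial m c : R4) = c • monomial m 1 := by simp [smul_monomial]
      rw [h2, smul_mul_assoc, map_smul, lam_inv_monomial hp.1 hp.2, smul_zero]
    | add a b ha hb => rw [add_mul, map_add, ha, hb, add_zero]
  | zero => intro q; simp
  | add x y _ _ hx hy => intro q; rw [mul_add, map_add, hx, hy, add_zero]
  | smul c x _ hx => intro q; rw [smul_eq_mul, ← mul_assoc]; exact hx _

lemma gg_notMem : gg ∉ diagIdeal 4 := by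
  intro h
  have := lam_diag h 1
  rw [one_mul] at this
  exact lam_gg this

lemma vv_ne' {k : Fin 4 → ℤ} (h : vv k ≠ 0) :
    k 1 ≠ k 0 ∧ k 2 ≠ k 0 ∧ k 3 ≠ k 0 ∧ k 2 ≠ k 1 ∧ k 3 ≠ k 1 ∧ k 3 ≠ k 2 := by
  unfold vv at h
  split_ifs at h with h1
  · simp only [ne_eq, mul_eq_zero, sub_eq_zero, not_or] at h
    tauto
  · exact absurd rfl h

lemma phi_top (k : Fin 4 → ℤ) (hk : k ≠ fun _ => 8) : phi (EE ![7,5,3,1] 0) k = 0 := by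
  by_contra h
  have hb := phi_box h
  have hv := right_ne_zero_of_mul h
  have h1 := vv_ne hv
  have h2 := vv_ne' hv
  simp only [EE_inl, EE_inr] at h1 h2
  have b0 := hb 0
  have b1 := hb 1
  have b2 := hb 2
  have b3 := hb 3
  have c0 := h1 0
  have c1 := h1 1
  have c2 := h1 2
  have c3 := h1 3
  simp at c0 c1 c2 c3 h2
  apply hk
  have e0 : k 0 = 8 := by omega
  have e1 : k 1 = 8 := by omega
  have e2 : k 2 = 8 := by omega
  have e3 : k 3 = 8 := by omega
  funext i
  fin_cases i <;> assumption

lemma phi_top_val : phi (EE ![7,5,3,1] 0) (fun _ => 8) ≠ 0 := by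
  rw [phi_EE]; decide +kernel

def WW : Submodule ℂ LL := Submodule.span ℂ (Set.range phiC)

lemma top_mem : (Pi.single (fun _ => 8) 1 : LL) ∈ WW := by
  have h : (Pi.single (fun _ => 8) 1 : LL) =
      ((phi (EE ![7,5,3,1] 0) (fun _ => 8) : ℂ))⁻¹ • phiC (EE ![7,5,3,1] 0) := by
    funext k
    by_cases hk : k = fun _ => 8
    · subst hk
      have : (phi (EE ![7,5,3,1] 0) (fun _ => 8) : ℂ) ≠ 0 := by exact_mod_cast phi_top_val
      simp [phiC, this]
    · simp [hk, phiC, phi_top k hk]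
  rw [h]
  exact Submodule.smul_mem _ _ (Submodule.subset_span ⟨_, rfl⟩)

lemma Yop_WW (i : Fin 4) {f : LL} (hf : f ∈ WW) : Yop i f ∈ WW := by
  induction hf using Submodule.span_induction with
  | mem x hx =>
    obtain ⟨s, rfl⟩ := hx
    rw [Yop_phiC]
    exact add_mem (Submodule.subset_span ⟨_, rfl⟩)
      (Submodule.smul_mem _ _ (Submodule.subset_span ⟨_, rfl⟩))
  | zero => simp
  | add x y _ _ hx hy => rw [map_add]; exact add_mem hx hy
  | smul c x _ hx => rw [map_smul]; exact Submodule.smul_mem _ _ hx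

lemma Yop_single (i : Fin 4) (k : Fin 4 → ℤ) :
    Yop i (Pi.single k 1) = (cb (k i - 1) : ℂ) • (Pi.single (k - Pi.single i 1) 1 : LL) := by
  funext l
  simp only [Yop, LinearMap.coe_mk, AddHom.coe_mk, Pi.smul_apply, smul_eq_mul]
  by_cases h : l + Pi.single i 1 = k
  · subst h; simp
  · have : l ≠ k - Pi.single i 1 := by
      rintro rfl; apply h; simp
    simp [h, this]

lemma cb_ne {j : ℤ} (h : 0 ≤ j) : cb j ≠ 0 := by
  unfold cb; split_ifs <;> omega

lemma single_mem (N : ℕ) : ∀ n : Fin 4 → ℕ, ∑ i, n i = N → (∀ i, n i ≤ 8) →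
    (Pi.single (fun i => 8 - (n i : ℤ)) 1 : LL) ∈ WW := by
  induction N with
  | zero =>
    intro n hn _
    have : ∀ i, n i = 0 := by simpa using hn
    simpa [this] using top_mem
  | succ N ih =>
    intro n hn hle
    have hex : ∃ i, n i ≠ 0 := by
      by_contra hc
      push Not at hc
      simp [hc] at hn
    obtain ⟨i, hi⟩ := hex
    have h1 := ih (Function.update n i (n i - 1)) (by
        rw [Finset.sum_update_of_mem (Finset.mem_univ i)]
        rw [← Finset.add_sum_erase _ _ (Finset.mem_univ i)] at hn
        rw [Finset.sdiff_singleton_eq_erase]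
        omega) (by
        intro j
        by_cases hj : j = i
        · subst hj; have := hle j; simp; omega
        · simp [hj, hle j])
    have h2 := Yop_WW i h1
    rw [Yop_single] at h2
    have h3 : (fun j => 8 - ((Function.update n i (n i - 1) j : ℕ) : ℤ)) - Pi.single i 1 =
        fun j => 8 - (n j : ℤ) := by
      funext j
      by_cases hj : j = i
      · subst hj; simp; omega
      · simp [hj]
    rw [h3] at h2
    have h4 : ((cb (8 - ((Function.update n i (n i - 1) i : ℕ) : ℤ) - 1) : ℤ) : ℂ) ≠ 0 := by
      have : cb (8 - ((Function.update n i (n i - 1) i : ℕ) : ℤ) - 1) ≠ 0 := by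
        apply cb_ne
        have := hle i
        simp; omega
      exact_mod_cast this
    have h5 := Submodule.smul_mem _ (((cb (8 - ((Function.update n i (n i - 1) i : ℕ) : ℤ) - 1) : ℤ) : ℂ))⁻¹ h2
    rwa [smul_smul, inv_mul_cancel₀ h4, one_smul] at h5

lemma card_le_of_span {ι : Type} [Fintype ι] (w : ι → LL)
    (h : WW ≤ Submodule.span ℂ (Set.range w)) : 9 ^ 4 ≤ Fintype.card ι := by
  set e : (Fin 4 → Fin 9) → LL := fun n => Pi.single (fun i => 8 - ((n i : ℕ) : ℤ)) 1 with he
  have hinj : ∀ n n' : Fin 4 → Fin 9,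
      (fun i => 8 - ((n i : ℕ) : ℤ)) = (fun i => 8 - ((n' i : ℕ) : ℤ)) → n = n' := by
    intro n n' hh
    funext i
    have := congrFun hh i
    ext
    omega
  have hli : LinearIndependent ℂ e := by
    rw [Fintype.linearIndependent_iff]
    intro g hg n
    have := congrFun hg (fun i => 8 - ((n i : ℕ) : ℤ))
    rw [Finset.sum_apply, Finset.sum_eq_single n] at this
    · simpa [he] using this
    · intro n' _ hn'
      have h1 : (fun i => 8 - ((n i : ℕ) : ℤ)) ≠ (fun i => 8 - ((n' i : ℕ) : ℤ)) :=
        fun hc => hn' (hinj _ _ hc).symm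
      simp [he, h1]
    · simp
  have hmem : ∀ n, e n ∈ Submodule.span ℂ (Set.range w) := fun n =>
    h (single_mem _ (fun i => (n i : ℕ)) rfl (fun i => by have := (n i).2; omega))
  set e' : (Fin 4 → Fin 9) → Submodule.span ℂ (Set.range w) := fun n => ⟨e n, hmem n⟩
  have hli' : LinearIndependent ℂ e' :=
    LinearIndependent.of_comp (Submodule.span ℂ (Set.range w)).subtype hli
  have : Module.Finite ℂ (Submodule.span ℂ (Set.range w)) :=
    Module.Finite.span_of_finite ℂ (Set.finite_range w)
  have h1 := hli'.fintype_card_le_finrank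
  have h2 := finrank_range_le_card (R := ℂ) w
  rw [Set.finrank] at h2
  have h3 : Fintype.card (Fin 4 → Fin 9) = 9 ^ 4 := by simp
  omega

lemma finrank_JJ [Module.Finite ℂ (R4 ⧸ JJ)] : 9 ^ 4 ≤ Module.finrank ℂ (R4 ⧸ JJ) := by
  set mk : R4 →ₗ[ℂ] (R4 ⧸ JJ) := (Ideal.Quotient.mkₐ ℂ JJ).toLinearMap with hmk
  have hmk0 : ∀ f, mk f = 0 ↔ f ∈ JJ := fun f => Ideal.Quotient.eq_zero_iff_mem
  set t : Set (R4 ⧸ JJ) := Set.range (fun s : E4 => mk (monomial s 1)) with ht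
  obtain ⟨b, hbt, hspan, hli⟩ := exists_linearIndependent ℂ t
  have hfin : Finite b := hli.finite
  have := Fintype.ofFinite b
  have hcard : Fintype.card b ≤ Module.finrank ℂ (R4 ⧸ JJ) := hli.fintype_card_le_finrank
  refine le_trans ?_ hcard
  have hex : ∀ x : b, ∃ s : E4, mk (monomial s 1) = x := fun x => hbt x.2
  choose m hm using hex
  have hcard2 : Fintype.card (Fin (Fintype.card b)) = Fintype.card b := by simp
  rw [← hcard2]
  set eqv := Fintype.equivFin b
  apply card_le_of_span (fun x => phiC (m (eqv.symm x)))
  have hrange : Set.range (fun x => phiC (m (eqv.symm x))) = Set.range (fun x : b => phiC (m x)) :=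
    eqv.symm.surjective.range_comp (fun x : b => phiC (m x))
  rw [hrange]
  set U := Submodule.span ℂ (Set.range (fun x : b => phiC (m x))) with hU
  have hGG : ∀ d, GG d ≤ U := by
    intro d
    induction d with
    | zero => rw [GG, Submodule.span_le]; rintro _ ⟨s, hs, rfl⟩; exact absurd hs (Nat.not_lt_zero _)
    | succ d ih =>
      rw [GG, Submodule.span_le]
      rintro _ ⟨s, hs, rfl⟩
      have hs : s.degree < d + 1 := hs
      by_cases hsd : s.degree < d
      · exact ih (phiC_mem hsd)
      have hsd : s.degree = d := by omega
      have h1 : mk (monomial s 1) ∈ Submodule.span ℂ (Set.range ((↑) : b → R4 ⧸ JJ)) := by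
        rw [Subtype.range_coe, hspan]
        exact Submodule.subset_span ⟨s, rfl⟩
      rw [Submodule.mem_span_range_iff_exists_fun] at h1
      obtain ⟨c, hc⟩ := h1
      have h2 : (monomial s 1 - ∑ x, c x • monomial (m x) 1 : R4) ∈ JJ := by
        rw [← hmk0, map_sub, map_sum, ← hc, sub_eq_zero]
        apply Finset.sum_congr rfl
        intro x _
        rw [map_smul, hm]
      have h3 := ih (mem_JJ.1 h2 d)
      rw [map_sub, map_sub, homogeneousComponent_eq_self (isHomogeneous_monomial _ hsd),
        Phi_monomial, one_smul] at h3
      have h4 : Phi (homogeneousComponent d (∑ x, c x • monomial (m x) 1 : R4)) ∈ U := by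
        rw [map_sum, map_sum]
        apply Submodule.sum_mem
        intro x _
        rw [map_smul, map_smul]
        apply Submodule.smul_mem
        rw [homogeneousComponent_of_mem (isHomogeneous_monomial (1 : ℂ) rfl)]
        split_ifs
        · rw [Phi_monomial, one_smul]
          exact Submodule.subset_span ⟨x, rfl⟩
        · simp
      have := add_mem h3 h4
      simpa using this
  rw [WW, Submodule.span_le]
  rintro _ ⟨s, rfl⟩
  exact hGG (s.degree + 1) (phiC_mem (Nat.lt_succ_self _))

lemma psum_mem (e : Fin 4 → Fin 4 ⊕ Fin 4) (he : e = Sum.inl ∨ e = Sum.inr) (k : ℕ) (hk : k ≠ 0) :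
    (∑ i, (X (e i) : R4) ^ (2 * k)) ∈ diagIdeal 4 := by
  apply Ideal.subset_span
  constructor
  · intro ε σ
    have hsq : ∀ i, (((ε i : ℤ) : ℂ)) ^ (2 * k) = 1 := by
      intro i
      rcases Int.units_eq_one_or (ε i) with h | h <;> simp [h]
    rcases he with rfl | rfl
    · rw [map_sum, ← Equiv.sum_comp σ (fun i => (X (Sum.inl i) : R4) ^ (2 * k))]
      simp [bAct, smul_pow, hsq]
    · rw [map_sum, ← Equiv.sum_comp σ (fun i => (X (Sum.inr i) : R4) ^ (2 * k))]
      simp [bAct, smul_pow, hsq]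
  · simp [hk]

lemma newton (x : Fin 4 → R4) (I : Ideal R4) (h : ∀ k, k ≠ 0 → ∑ i, x i ^ (2 * k) ∈ I) (i : Fin 4) :
    x i ^ 8 ∈ I := by
  have h1 := h 1 one_ne_zero
  have h2 := h 2 two_ne_zero
  have h3 := h 3 three_ne_zero
  have h4 := h 4 four_ne_zero
  set p1 := ∑ i, x i ^ (2 * 1) with hp1
  set p2 := ∑ i, x i ^ (2 * 2) with hp2
  set p3 := ∑ i, x i ^ (2 * 3) with hp3
  set p4 := ∑ i, x i ^ (2 * 4) with hp4
  have key : 24 * x i ^ 8 =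
      p1 * (24 * x i ^ 6 - 12 * p1 * x i ^ 4 + (4 * p1 ^ 2 - 12 * p2) * x i ^ 2
        - (p1 ^ 3 - 6 * p1 * p2 + 8 * p3)) +
      p2 * (12 * x i ^ 4 - 3 * p2) + p3 * (8 * x i ^ 2) + p4 * 6 := by
    rw [Fin.sum_univ_four] at hp1 hp2 hp3 hp4
    rw [hp1, hp2, hp3, hp4]
    fin_cases i <;> (try dsimp) <;> ring
  have hm : 24 * x i ^ 8 ∈ I := by
    rw [key]
    exact add_mem (add_mem (add_mem (Ideal.mul_mem_right _ _ h1) (Ideal.mul_mem_right _ _ h2))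
      (Ideal.mul_mem_right _ _ h3)) (Ideal.mul_mem_right _ _ h4)
  have h24 : x i ^ 8 = C (1 / 24 : ℂ) * (24 * x i ^ 8) := by
    have : (24 : R4) = C (24 : ℂ) := (map_ofNat (C (σ := Fin 4 ⊕ Fin 4) (R := ℂ)) 24).symm
    rw [this, ← mul_assoc, ← C_mul]; norm_num
  rw [h24]
  exact Ideal.mul_mem_left _ _ hm

lemma finite_quot : Module.Finite ℂ (R4 ⧸ diagIdeal 4) := by
  have hX : ∀ j : Fin 4 ⊕ Fin 4, (X j : R4) ^ 8 ∈ diagIdeal 4 := by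
    rintro (i | i)
    · exact newton (fun i => X (Sum.inl i)) _ (fun k hk => psum_mem Sum.inl (Or.inl rfl) k hk) i
    · exact newton (fun i => X (Sum.inr i)) _ (fun k hk => psum_mem Sum.inr (Or.inr rfl) k hk) i
  have hintegral : Algebra.IsIntegral ℂ (R4 ⧸ diagIdeal 4) := by
    constructor
    intro x
    obtain ⟨f, rfl⟩ := Ideal.Quotient.mk_surjective x
    induction f using MvPolynomial.induction_on with
    | C a => exact isIntegral_algebraMap (R := ℂ) (A := R4 ⧸ diagIdeal 4) (x := a)
    | add p q hp hq => rw [map_add]; exact hp.add hq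
    | mul_X p j hp =>
      rw [map_mul]
      refine hp.mul (IsIntegral.of_pow (n := 8) (by norm_num) ?_)
      rw [← map_pow, Ideal.Quotient.eq_zero_iff_mem.2 (hX j)]
      exact isIntegral_zero
  exact Algebra.IsIntegral.finite

/-- For `n = 4`, `dim_ℂ R_W ≥ 9⁴ + 1` for the diagonal coinvariant ring of `W(B₄)`. -/
theorem dim_diag_coinv_B4 :
    9 ^ 4 + 1 ≤ Module.finrank ℂ (MvPolynomial (Fin 4 ⊕ Fin 4) ℂ ⧸ diagIdeal 4) := by
  have := finite_quot
  set π : (R4 ⧸ diagIdeal 4) →ₗ[ℂ] (R4 ⧸ JJ) :=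
    (Ideal.Quotient.factorₐ ℂ diag_le_JJ).toLinearMap with hπ
  have hsurj : Function.Surjective π := Ideal.Quotient.factor_surjective diag_le_JJ
  have hfin : Module.Finite ℂ (R4 ⧸ JJ) := Module.Finite.of_surjective π hsurj
  have h1 := finrank_JJ
  have h2 := LinearMap.finrank_range_add_finrank_ker π
  rw [LinearMap.range_eq_top.2 hsurj, finrank_top] at h2
  have h3 : 0 < Module.finrank ℂ (LinearMap.ker π) := by
    rw [Module.finrank_pos_iff_exists_ne_zero]
    refine ⟨⟨Ideal.Quotient.mk (diagIdeal 4) gg, ?_⟩, ?_⟩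
    · rw [LinearMap.mem_ker]
      exact Ideal.Quotient.eq_zero_iff_mem.2 gg_mem
    · intro h
      have h' := congrArg Subtype.val h
      exact gg_notMem (Ideal.Quotient.eq_zero_iff_mem.1 h')
  change 9 ^ 4 + 1 ≤ Module.finrank ℂ (R4 ⧸ diagIdeal 4)
  omega
end
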